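/- arXiv:1312.7402 — 3 statements merged into one kernel-verified Lean document; each statement's English description precedes it below -/
import Mathlib

section
/- Assume (H1) and (H3), and that the kernel factorizes as K(u,v) = K⁽¹⁾(u)K⁽²⁾(v) with K⁽¹⁾ supported in [−A,A]^{d1}. Then for any bandwidth h ∈ (0,∞)^d with h_i ≤ 1/k_n for i = 1,…,d1, the kernel estimator f̂_h built with the true f_X satisfies R_x²(f̂_h,2) ≥ ‖K_h*f − f‖²_{x,2} + (‖K⁽²⁾‖₂² / (n ∏_{i=1}^d h_i)) · ∫ [K⁽¹⁾(s)]² / f_X(x − (s₁h₁,…,s_{d1}h_{d1})) ds − ‖K‖₁²‖f‖_∞/n, where R_x²(f̂_h,2) = E‖f̂_h − f‖²_{x,2} = ‖K_h*f − f‖²_{x,2} + ∫ Var(f̂_h(x,y)) dy. -/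
open MeasureTheory ProbabilityTheory

lemma krlb_scale {d : ℕ} (h : Fin d → ℝ) (hpos : ∀ i, 0 < h i) :
    (volume : Measure (Fin d → ℝ)) = ENNReal.ofReal ((∏ i, h i)⁻¹) •
      Measure.map (fun (u : Fin d → ℝ) i => u i / h i) volume := by
  have hP : 0 < ∏ i, h i := Finset.prod_pos (fun i _ => hpos i)
  have hdet : (Matrix.diagonal (fun i => (h i)⁻¹)).det = (∏ i, h i)⁻¹ := by
    rw [Matrix.det_diagonal, Finset.prod_inv_distrib]
  have := Real.smul_map_diagonal_volume_pi (D := fun i => (h i)⁻¹)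
    (by rw [hdet]; positivity)
  rw [hdet, abs_of_pos (by positivity)] at this
  have e : ⇑(Matrix.toLin' (Matrix.diagonal (fun i => (h i)⁻¹))) = fun u i => u i / h i := by
    ext u i
    simp [Matrix.mulVec_diagonal, div_eq_inv_mul]
  rw [e] at this
  exact this.symm

lemma krlb_meas_div {d : ℕ} (h : Fin d → ℝ) :
    Measurable (fun (u : Fin d → ℝ) i => u i / h i) := by fun_prop

lemma krlb_integral_scale {d : ℕ} (h : Fin d → ℝ) (hpos : ∀ i, 0 < h i)
    (g : (Fin d → ℝ) → ℝ) (hg : Measurable g) :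
    ∫ u : Fin d → ℝ, g (fun i => u i / h i) = (∏ i, h i) * ∫ u, g u := by
  have hP : 0 < ∏ i, h i := Finset.prod_pos (fun i _ => hpos i)
  have e : ∫ u, g u = (∏ i, h i)⁻¹ * ∫ u : Fin d → ℝ, g (fun i => u i / h i) := by
    conv_lhs => rw [krlb_scale h hpos]
    rw [integral_smul_measure, integral_map (krlb_meas_div h).aemeasurable
      hg.aestronglyMeasurable, ENNReal.toReal_ofReal (by positivity), smul_eq_mul]
  rw [e, mul_inv_cancel_left₀ hP.ne']

lemma krlb_integrable_scale {d : ℕ} (h : Fin d → ℝ) (hpos : ∀ i, 0 < h i)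
    (g : (Fin d → ℝ) → ℝ) (hg : Measurable g) (hi : Integrable g) :
    Integrable (fun u : Fin d → ℝ => g (fun i => u i / h i)) := by
  have hP : 0 < ∏ i, h i := Finset.prod_pos (fun i _ => hpos i)
  rw [krlb_scale h hpos] at hi
  rw [integrable_smul_measure (by simp [hP]) (by simp)] at hi
  exact (integrable_map_measure hg.aestronglyMeasurable (krlb_meas_div h).aemeasurable).1 hi

/-- bias-variance decomposition -/
lemma krlb_bias_var {Ω E F : Type*} [MeasurableSpace Ω] [MeasurableSpace E] [MeasureSpace F]
    [SFinite (volume : Measure F)]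
    (P : Measure Ω) [IsProbabilityMeasure P] (μ : Measure E) [IsProbabilityMeasure μ]
    (n : ℕ) (hn : 0 < n) (W : Fin n → Ω → E) (hW : ∀ i, Measurable (W i))
    (hlaw : ∀ i, Measure.map (W i) P = μ) (hind : iIndepFun W P)
    (Z : E → F → ℝ) (hZ : Measurable (Function.uncurry Z)) (M : ℝ) (hM : ∀ p y, |Z p y| ≤ M)
    (hZ2 : Integrable (fun q : E × F => Z q.1 q.2 ^ 2) (μ.prod volume))
    (g : F → ℝ) (hg : Measurable g) (hg2 : Integrable (fun y => g y ^ 2)) :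
    Integrable (fun y => (∫ p, Z p y ∂μ) ^ 2) ∧
    ∫ ω, (∫ y, ((n : ℝ)⁻¹ * ∑ i, Z (W i ω) y - g y) ^ 2) ∂P
      = (∫ y, ((∫ p, Z p y ∂μ) - g y) ^ 2)
        + (n : ℝ)⁻¹ * ((∫ p, (∫ y, Z p y ^ 2) ∂μ) - ∫ y, (∫ p, Z p y ∂μ) ^ 2) := by
  have hn' : (n : ℝ) ≠ 0 := by positivity
  have hZy : ∀ y, Measurable (fun p => Z p y) := fun y => hZ.comp measurable_prodMk_right
  have hmp : ∀ i, MeasurePreserving (W i) P μ := fun i => ⟨hW i, hlaw i⟩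
  have hZL : ∀ y, MemLp (fun p => Z p y) 2 μ := fun y =>
    MemLp.of_bound (hZy y).aestronglyMeasurable M (.of_forall fun p => hM p y)
  have hZWL : ∀ i y, MemLp (fun ω => Z (W i ω) y) 2 P := fun i y =>
    MemLp.of_bound ((hZy y).comp (hW i)).aestronglyMeasurable M (.of_forall fun p => hM _ y)
  have hvar : ∀ y, Var[fun p => Z p y; μ] = (∫ p, Z p y ^ 2 ∂μ) - (∫ p, Z p y ∂μ) ^ 2 := by
    intro y
    exact variance_eq_sub (hZL y)
  have hmeasm : Measurable (fun y => ∫ p, Z p y ∂μ) := by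
    have : StronglyMeasurable (Function.uncurry (fun y p => Z p y)) :=
      (hZ.comp measurable_swap).stronglyMeasurable
    exact this.integral_prod_right.measurable
  have hEZ2 : Integrable (fun y => ∫ p, Z p y ^ 2 ∂μ) := hZ2.integral_prod_right
  have hm2 : Integrable (fun y => (∫ p, Z p y ∂μ) ^ 2) := by
    refine hEZ2.mono' (hmeasm.pow_const 2).aestronglyMeasurable (.of_forall fun y => ?_)
    rw [Real.norm_of_nonneg (sq_nonneg _)]
    have := variance_nonneg (fun p => Z p y) μ
    rw [hvar] at this
    linarith
  refine ⟨hm2, ?_⟩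
  -- swap
  have hZWprod : ∀ i, MemLp (fun q : Ω × F => Z (W i q.1) q.2) 2 (P.prod volume) := by
    intro i
    have h1 : MeasurePreserving (Prod.map (W i) (id : F → F)) (P.prod volume) (μ.prod volume) :=
      (hmp i).prod (MeasurePreserving.id _)
    have h2 : MemLp (Function.uncurry Z) 2 (μ.prod volume) :=
      (memLp_two_iff_integrable_sq hZ.aestronglyMeasurable).2 hZ2
    exact h2.comp_measurePreserving h1
  have hgprod : MemLp (fun q : Ω × F => g q.2) 2 (P.prod volume) := by
    have : MemLp g 2 (volume : Measure F) :=
      (memLp_two_iff_integrable_sq hg.aestronglyMeasurable).2 hg2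
    exact this.comp_snd P
  have hint : Integrable (Function.uncurry fun ω y =>
      ((n : ℝ)⁻¹ * ∑ i, Z (W i ω) y - g y) ^ 2) (P.prod volume) := by
    have h1 : MemLp (fun q : Ω × F => ∑ i, Z (W i q.1) q.2) 2 (P.prod volume) :=
      memLp_finsetSum _ fun i _ => hZWprod i
    exact ((h1.const_mul (n : ℝ)⁻¹).sub hgprod).integrable_sq
  rw [integral_integral_swap hint]
  have hpt : ∀ y, ∫ ω, ((n : ℝ)⁻¹ * ∑ i, Z (W i ω) y - g y) ^ 2 ∂P
      = ((∫ p, Z p y ∂μ) - g y) ^ 2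
        + (n : ℝ)⁻¹ * ((∫ p, Z p y ^ 2 ∂μ) - (∫ p, Z p y ∂μ) ^ 2) := by
    intro y
    have hS : MemLp (fun ω => ∑ i, Z (W i ω) y) 2 P := memLp_finsetSum _ fun i _ => hZWL i y
    have hA : MemLp (fun ω => (n : ℝ)⁻¹ * ∑ i, Z (W i ω) y) 2 P := hS.const_mul _
    have hB : MemLp (fun ω => (n : ℝ)⁻¹ * ∑ i, Z (W i ω) y - g y) 2 P := hA.sub (memLp_const _)
    have hmean : ∫ ω, ((n : ℝ)⁻¹ * ∑ i, Z (W i ω) y - g y) ∂P = (∫ p, Z p y ∂μ) - g y := by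
      rw [integral_sub (hA.integrable (by norm_num)) (integrable_const _), integral_const_mul,
        integral_finsetSum _ (fun i _ => (hZWL i y).integrable (by norm_num))]
      have : ∀ i, ∫ ω, Z (W i ω) y ∂P = ∫ p, Z p y ∂μ := by
        intro i
        rw [← hlaw i, integral_map (hW i).aemeasurable (hZy y).aestronglyMeasurable]
      simp [this, hn']
    have hv := variance_eq_sub hB
    rw [hmean, variance_sub_const hA.aestronglyMeasurable, variance_const_mul] at hv
    have hvs : Var[fun ω => ∑ i, Z (W i ω) y; P] = n * Var[fun p => Z p y; μ] := by
      have h1 := IndepFun.variance_sum (μ := P) (X := fun i ω => Z (W i ω) y)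
        (s := Finset.univ) (fun i _ => hZWL i y)
        (fun i _ j _ hij => ((hind.indepFun hij).comp (hZy y) (hZy y)))
      have h2 : (∑ i, fun ω => Z (W i ω) y) = fun ω => ∑ i, Z (W i ω) y := by
        ext ω; simp
      rw [h2] at h1
      rw [h1]
      have : ∀ i, Var[fun ω => Z (W i ω) y; P] = Var[fun p => Z p y; μ] := by
        intro i
        rw [← hlaw i, variance_map (hZy y).aemeasurable (hW i).aemeasurable]
        rfl
      simp [this]
    rw [hvs, hvar] at hv
    simp only [Pi.pow_apply] at hv
    have : ((n : ℝ)⁻¹) ^ 2 * (n * ((∫ p, Z p y ^ 2 ∂μ) - (∫ p, Z p y ∂μ) ^ 2))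
      = (n : ℝ)⁻¹ * ((∫ p, Z p y ^ 2 ∂μ) - (∫ p, Z p y ∂μ) ^ 2) := by
      field_simp
    linarith
  simp_rw [hpt]
  have hmL : MemLp (fun y => ∫ p, Z p y ∂μ) 2 (volume : Measure F) :=
    (memLp_two_iff_integrable_sq hmeasm.aestronglyMeasurable).2 hm2
  have hgL : MemLp g 2 (volume : Measure F) :=
    (memLp_two_iff_integrable_sq hg.aestronglyMeasurable).2 hg2
  have hi1 : Integrable (fun y => ((∫ p, Z p y ∂μ) - g y) ^ 2) := (hmL.sub hgL).integrable_sq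
  have hi2 : Integrable (fun y => (n : ℝ)⁻¹ * ((∫ p, Z p y ^ 2 ∂μ) - (∫ p, Z p y ∂μ) ^ 2)) :=
    (hEZ2.sub hm2).const_mul _
  rw [integral_add hi1 hi2,
    integral_const_mul, integral_sub hEZ2 hm2]
  congr 3
  exact (integral_integral_swap (f := fun p y => Z p y ^ 2) hZ2).symm

/-- integrability of a product with a translate -/
lemma krlb_prod {d1 d2 : ℕ} (μ : Measure ((Fin d1 → ℝ) × (Fin d2 → ℝ))) [IsProbabilityMeasure μ]
    (G : (Fin d1 → ℝ) → ℝ) (hG : Measurable G) (M : ℝ) (hM : ∀ u, |G u| ≤ M)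
    (k : (Fin d2 → ℝ) → ℝ) (hk : Measurable k) (hki : Integrable k) :
    Integrable (fun q : ((Fin d1 → ℝ) × (Fin d2 → ℝ)) × (Fin d2 → ℝ) =>
      G q.1.1 * k (q.2 - q.1.2)) (μ.prod volume) ∧
    (∫ p, (∫ y, G p.1 * k (y - p.2)) ∂μ) = (∫ p, G p.1 ∂μ) * ∫ y, k y := by
  constructor
  · rw [integrable_prod_iff (by
      apply Measurable.aestronglyMeasurable
      exact (hG.comp (by fun_prop)).mul (hk.comp (by fun_prop)))]
    refine ⟨(.of_forall fun p => ((hki.comp_sub_right p.2).const_mul (G p.1))), ?_⟩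
    have : ∀ p : (Fin d1 → ℝ) × (Fin d2 → ℝ), ∫ y, ‖G p.1 * k (y - p.2)‖
        = ‖G p.1‖ * ∫ y, ‖k y‖ := by
      intro p
      simp_rw [norm_mul]
      rw [integral_const_mul, integral_sub_right_eq_self (fun y => ‖k y‖)]
    simp only [this]
    refine Integrable.mul_const ?_ _
    refine Integrable.of_bound ((hG.comp measurable_fst).norm.aestronglyMeasurable) M
      (.of_forall fun p => ?_)
    simpa using hM p.1
  · have : ∀ p : (Fin d1 → ℝ) × (Fin d2 → ℝ), ∫ y, G p.1 * k (y - p.2)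
        = G p.1 * ∫ y, k y := by
      intro p
      rw [integral_const_mul, integral_sub_right_eq_self k]
    simp only [this]
    rw [integral_mul_const]

/-- integrals against a law with a density -/
lemma krlb_dens {d1 d2 : ℕ} (fXY : (Fin d1 → ℝ) → (Fin d2 → ℝ) → ℝ)
    (hm : Measurable (Function.uncurry fXY)) (h0 : ∀ u v, 0 ≤ fXY u v)
    (μ : Measure ((Fin d1 → ℝ) × (Fin d2 → ℝ))) [IsProbabilityMeasure μ]
    (hμ : μ = (volume : Measure ((Fin d1 → ℝ) × (Fin d2 → ℝ))).withDensity
          (fun p => ENNReal.ofReal (fXY p.1 p.2)))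
    (G : (Fin d1 → ℝ) × (Fin d2 → ℝ) → ℝ) (hG : Measurable G) (M : ℝ) (hM : ∀ p, |G p| ≤ M) :
    Integrable (fun p => fXY p.1 p.2 * G p) ∧
    ∫ p, G p ∂μ = ∫ p, fXY p.1 p.2 * G p := by
  have hmm : Measurable (fun p : (Fin d1 → ℝ) × (Fin d2 → ℝ) => ENNReal.ofReal (fXY p.1 p.2)) :=
    hm.ennreal_ofReal
  have hlt : ∀ᵐ p : (Fin d1 → ℝ) × (Fin d2 → ℝ), ENNReal.ofReal (fXY p.1 p.2) < ⊤ :=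
    .of_forall fun p => ENNReal.ofReal_lt_top
  have hi : Integrable G μ := Integrable.of_bound hG.aestronglyMeasurable M
    (.of_forall fun p => hM p)
  constructor
  · rw [hμ, integrable_withDensity_iff_integrable_smul' hmm hlt] at hi
    simpa [ENNReal.toReal_ofReal, h0] using hi
  · rw [hμ, integral_withDensity_eq_integral_toReal_smul hmm hlt]
    simp [ENNReal.toReal_ofReal, h0]

lemma krlb_marg {d1 d2 : ℕ} (fXY : (Fin d1 → ℝ) → (Fin d2 → ℝ) → ℝ)
    (hm : Measurable (Function.uncurry fXY)) (h0 : ∀ u v, 0 ≤ fXY u v)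
    (μ : Measure ((Fin d1 → ℝ) × (Fin d2 → ℝ))) [IsProbabilityMeasure μ]
    (hμ : μ = (volume : Measure ((Fin d1 → ℝ) × (Fin d2 → ℝ))).withDensity
          (fun p => ENNReal.ofReal (fXY p.1 p.2)))
    (fX : (Fin d1 → ℝ) → ℝ) (hfX : ∀ u, fX u = ∫ v, fXY u v)
    (G : (Fin d1 → ℝ) → ℝ) (hG : Measurable G) (M : ℝ) (hM : ∀ p, |G p| ≤ M) :
    Integrable (fun u => fX u * G u) ∧
    ∫ p, G p.1 ∂μ = ∫ u, fX u * G u := by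
  obtain ⟨h1, h2⟩ := krlb_dens fXY hm h0 μ hμ (fun p => G p.1) (hG.comp measurable_fst) M
    (fun p => hM p.1)
  rw [Measure.volume_eq_prod] at h1 h2
  have e : ∀ u, ∫ v, fXY u v * G u = fX u * G u := by
    intro u; rw [integral_mul_const, hfX]
  constructor
  · have := h1.integral_prod_left
    simpa only [e] using this
  · rw [h2, integral_prod _ h1]
    simp only [e]

/-- L2 bound of the mean -/
lemma krlb_L2 {d1 d2 : ℕ} (fXY : (Fin d1 → ℝ) → (Fin d2 → ℝ) → ℝ)
    (hm : Measurable (Function.uncurry fXY)) (h0 : ∀ u v, 0 ≤ fXY u v)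
    (μ : Measure ((Fin d1 → ℝ) × (Fin d2 → ℝ))) [IsProbabilityMeasure μ]
    (hμ : μ = (volume : Measure ((Fin d1 → ℝ) × (Fin d2 → ℝ))).withDensity
          (fun p => ENNReal.ofReal (fXY p.1 p.2)))
    (fX : (Fin d1 → ℝ) → ℝ) (hfX : ∀ u, fX u = ∫ v, fXY u v)
    (a : (Fin d1 → ℝ) → ℝ) (ha : Measurable a) (M : ℝ) (hM : ∀ p, |a p| ≤ M)
    (k : (Fin d2 → ℝ) → ℝ) (hk : Measurable k) (hki : Integrable k) (Mk : ℝ)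
    (hMk : ∀ v, |k v| ≤ Mk) (S : ℝ) (hS0 : 0 ≤ S)
    (hS : ∀ u v, a u ≠ 0 → fXY u v ≤ S * fX u)
    (hm2 : Integrable (fun y => (∫ p, a p.1 * k (y - p.2) ∂μ) ^ 2)) :
    ∫ y, (∫ p, a p.1 * k (y - p.2) ∂μ) ^ 2
      ≤ ((∫ u, fX u * |a u|) * ∫ v, |k v|) ^ 2 * S := by
  set N := (∫ u, fX u * |a u|) * ∫ v, |k v| with hN
  obtain ⟨hp1, hp2⟩ := krlb_prod μ (fun u => |a u|) ha.abs M (by simpa using hM)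
    (fun v => |k v|) hk.abs hki.abs
  obtain ⟨hq1, hq2⟩ := krlb_marg fXY hm h0 μ hμ fX hfX (fun u => |a u|) ha.abs M (by simpa using hM)
  have hb0 : ∀ y, 0 ≤ ∫ p, |a p.1| * |k (y - p.2)| ∂μ := fun y =>
    integral_nonneg fun p => by positivity
  have hbsup : ∀ y, ∫ p, |a p.1| * |k (y - p.2)| ∂μ ≤ S * N := by
    intro y
    have hb : ∀ p : (Fin d1 → ℝ) × (Fin d2 → ℝ), |(|a p.1| * |k (y - p.2)|)| ≤ M * Mk := by
      intro p
      rw [abs_mul, abs_abs, abs_abs]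
      exact mul_le_mul (hM _) (hMk _) (abs_nonneg _) ((abs_nonneg _).trans (hM p.1))
    obtain ⟨h1, h2⟩ := krlb_dens fXY hm h0 μ hμ (fun p => |a p.1| * |k (y - p.2)|)
      ((ha.comp measurable_fst).abs.mul (hk.comp (by fun_prop)).abs) _ hb
    rw [h2]
    have hki' : Integrable (fun v => |k (y - v)|) := hki.abs.comp_sub_left y
    have hI := (hq1.mul_prod hki').const_mul S
    calc ∫ p : (Fin d1 → ℝ) × (Fin d2 → ℝ), fXY p.1 p.2 * (|a p.1| * |k (y - p.2)|)
        ≤ ∫ p : (Fin d1 → ℝ) × (Fin d2 → ℝ), S * (fX p.1 * |a p.1| * |k (y - p.2)|) := by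
          refine integral_mono h1 hI fun p => ?_
          by_cases hz : a p.1 = 0
          · simp [hz]
          · have := mul_le_mul_of_nonneg_right (hS p.1 p.2 hz)
              (mul_nonneg (abs_nonneg (a p.1)) (abs_nonneg (k (y - p.2))))
            simp only
            linarith
      _ = S * N := by
          rw [integral_const_mul, Measure.volume_eq_prod,
            integral_prod_mul (fun u => fX u * |a u|) (fun v => |k (y - v)|),
            integral_sub_left_eq_self (fun v => |k v|)]
  have hbint : Integrable (fun y => ∫ p, |a p.1| * |k (y - p.2)| ∂μ) := hp1.integral_prod_right
  have hbtot : ∫ y, (∫ p, |a p.1| * |k (y - p.2)| ∂μ) = N := by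
    rw [hN, ← hq2, ← hp2]
    exact (integral_integral_swap (f := fun (p : (Fin d1 → ℝ) × (Fin d2 → ℝ)) y => |a p.1| * |k (y - p.2)|) hp1).symm
  calc ∫ y, (∫ p, a p.1 * k (y - p.2) ∂μ) ^ 2
      ≤ ∫ y, (S * N) * (∫ p, |a p.1| * |k (y - p.2)| ∂μ) := by
        refine integral_mono hm2 (hbint.const_mul _) fun y => ?_
        have h1 : |∫ p, a p.1 * k (y - p.2) ∂μ| ≤ ∫ p, |a p.1| * |k (y - p.2)| ∂μ := by
          simpa only [abs_mul] using
            abs_integral_le_integral_abs (μ := μ) (f := fun p => a p.1 * k (y - p.2))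
        have h2 := hbsup y
        have h3 := hb0 y
        simp only
        rw [← sq_abs]
        calc _ ≤ (∫ p, |a p.1| * |k (y - p.2)| ∂μ) ^ 2 := by gcongr
          _ ≤ _ := by rw [sq]; gcongr
    _ = N ^ 2 * S := by
        rw [integral_const_mul, hbtot]; ring

/-- Proposition (lower bound for kernel rules), first part: a non-asymptotic lower
bound on the risk `R_x²(f̂_h, 2)` of the kernel estimator built with the true
design density `f_X`. -/
theorem kernel_risk_lower_bound
    {Ω : Type*} [MeasurableSpace Ω] (P : Measure Ω) [IsProbabilityMeasure P]
    (d1 d2 : ℕ) (hd1 : 0 < d1) (hd2 : 0 < d2)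
    (n : ℕ) (hn : 2 ≤ n)
    (X : Fin n → Ω → (Fin d1 → ℝ)) (Y : Fin n → Ω → (Fin d2 → ℝ))
    (hXmeas : ∀ i, Measurable (X i)) (hYmeas : ∀ i, Measurable (Y i))
    -- joint density of the i.i.d. observations
    (fXY : (Fin d1 → ℝ) → (Fin d2 → ℝ) → ℝ)
    (hfXYmeas : Measurable (Function.uncurry fXY)) (hfXYnonneg : ∀ u v, 0 ≤ fXY u v)
    (hdens : ∀ i, Measure.map (fun ω => (X i ω, Y i ω)) P
      = (volume : Measure ((Fin d1 → ℝ) × (Fin d2 → ℝ))).withDensity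
          (fun p => ENNReal.ofReal (fXY p.1 p.2)))
    (hiid : iIndepFun (fun i ω => (X i ω, Y i ω)) P)
    -- marginal and conditional densities
    (fX : (Fin d1 → ℝ) → ℝ) (hfX : ∀ u, fX u = ∫ v, fXY u v)
    (f : (Fin d1 → ℝ) → (Fin d2 → ℝ) → ℝ) (hf : ∀ u y, f u y = fXY u y / fX u)
    -- the fixed point and the neighborhood V_n(x)
    (x : Fin d1 → ℝ) (A : ℝ) (hA : 0 < A) (kn : ℝ) (hkn : 1 ≤ kn)
    (Vn : Set (Fin d1 → ℝ)) (hVn : Vn = {t | ∀ i, |t i - x i| ≤ 2 * A / kn})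
    -- (H1): `‖f‖_∞ < ∞`; (H3): `0 < δ ≤ 1`
    (Fsup : ℝ) (hFsup : IsLUB {r | ∃ t ∈ Vn, ∃ y, r = f t y} Fsup)
    (δ : ℝ) (hδ : IsGLB (fX '' Vn) δ) (hδpos : 0 < δ) (hδone : δ ≤ 1)
    -- the kernel `K(u,v) = K⁽¹⁾(u)K⁽²⁾(v)`, with `K⁽¹⁾` supported in `[-A,A]^{d1}`
    (K : (Fin d1 → ℝ) → (Fin d2 → ℝ) → ℝ) (K1 : (Fin d1 → ℝ) → ℝ) (K2 : (Fin d2 → ℝ) → ℝ)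
    (hKfact : ∀ u v, K u v = K1 u * K2 v)
    (hKmeas : Measurable (Function.uncurry K))
    (hKbdd : ∃ Mb : ℝ, ∀ u v, |K u v| ≤ Mb)
    (hKint : Integrable (fun p : (Fin d1 → ℝ) × (Fin d2 → ℝ) => K p.1 p.2))
    (hKL2 : Integrable (fun p : (Fin d1 → ℝ) × (Fin d2 → ℝ) => (K p.1 p.2) ^ 2))
    (hKtotal : (∫ u, ∫ v, K u v) = 1)
    (hK1supp : ∀ u, (∃ i, A < |u i|) → K1 u = 0)
    -- `‖K‖₁` and `‖K⁽²⁾‖₂²`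
    (nK1 : ℝ) (hnK1 : nK1 = ∫ u, ∫ v, |K u v|)
    (nK2sq : ℝ) (hnK2sq : nK2sq = ∫ v, (K2 v) ^ 2)
    -- the bandwidth `h`, with `h_i ≤ 1/k_n` for `i = 1,…,d1`
    (h : (Fin d1 → ℝ) × (Fin d2 → ℝ))
    (hhpos : (∀ i, 0 < h.1 i) ∧ (∀ j, 0 < h.2 j))
    (hhkn : ∀ i, h.1 i ≤ 1 / kn)
    -- the dilated kernel, the estimator, and the convolution `K_h * f`
    (Kh : ((Fin d1 → ℝ) × (Fin d2 → ℝ)) → (Fin d1 → ℝ) → (Fin d2 → ℝ) → ℝ)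
    (hKh : ∀ h' u v, Kh h' u v
      = ((∏ i, h'.1 i) * (∏ j, h'.2 j))⁻¹ * K (fun i => u i / h'.1 i) (fun j => v j / h'.2 j))
    (fhat : Ω → (Fin d2 → ℝ) → ℝ)
    (hfhat : ∀ ω y, fhat ω y = (n : ℝ)⁻¹ * ∑ i, Kh h (x - X i ω) (y - Y i ω) / fX (X i ω))
    (Khf : (Fin d1 → ℝ) → (Fin d2 → ℝ) → ℝ)
    (hKhf : ∀ t y, Khf t y = ∫ u, ∫ v, Kh h (t - u) (y - v) * f u v) :
    -- conclusion: lower bound for `R_x²(f̂_h, 2) = E‖f̂_h − f‖²_{x,2}`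
    (∫ y, (Khf x y - f x y) ^ 2)
      + nK2sq / (n * ((∏ i, h.1 i) * (∏ j, h.2 j)))
          * (∫ s, (K1 s) ^ 2 / fX (fun i => x i - s i * h.1 i))
      - nK1 ^ 2 * Fsup / n
    ≤ ∫ ω, (∫ y, (fhat ω y - f x y) ^ 2) ∂P := by
  obtain ⟨hh1, hh2⟩ := hhpos
  have hP1 : 0 < ∏ i, h.1 i := Finset.prod_pos (fun i _ => hh1 i)
  have hP2 : 0 < ∏ j, h.2 j := Finset.prod_pos (fun j _ => hh2 j)
  set H1 := ∏ i, h.1 i with hH1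
  set H2 := ∏ j, h.2 j with hH2
  have hn0 : 0 < n := by omega
  have hnR : (0 : ℝ) < n := by exact_mod_cast hn0
  -- the kernel factors
  have hK1ne : ∃ u, K1 u ≠ 0 := by
    by_contra! hc
    simp [hKfact, hc] at hKtotal
  have hK2ne : ∃ v, K2 v ≠ 0 := by
    by_contra! hc
    simp [hKfact, hc] at hKtotal
  obtain ⟨u0, hu0⟩ := hK1ne
  obtain ⟨v0, hv0⟩ := hK2ne
  obtain ⟨Mb, hMb⟩ := hKbdd
  have hK1eq : K1 = fun u => K u v0 / K2 v0 := by
    ext u; rw [hKfact]; field_simp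
  have hK2eq : K2 = fun v => K u0 v / K1 u0 := by
    ext v; rw [hKfact]; field_simp
  have hK1m : Measurable K1 := by
    rw [hK1eq]; exact (hKmeas.comp measurable_prodMk_right).div_const _
  have hK2m : Measurable K2 := by
    rw [hK2eq]; exact (hKmeas.comp measurable_prodMk_left).div_const _
  have hK1b : ∀ u, |K1 u| ≤ Mb / |K2 v0| := by
    intro u
    rw [le_div_iff₀ (abs_pos.2 hv0), ← abs_mul, ← hKfact]
    exact hMb _ _
  have hK2b : ∀ v, |K2 v| ≤ Mb / |K1 u0| := by
    intro v
    rw [le_div_iff₀ (abs_pos.2 hu0), mul_comm, ← abs_mul, ← hKfact]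
    exact hMb _ _
  have hM1 : 0 ≤ Mb / |K2 v0| := (abs_nonneg _).trans (hK1b u0)
  have hK2i : Integrable K2 := by
    simp only [hKfact] at hKint
    rw [Measure.volume_eq_prod] at hKint
    by_contra hcon
    have hae : ∀ᵐ u, K1 u = 0 := by
      filter_upwards [hKint.prod_right_ae] with u hu
      by_contra hne
      apply hcon
      have := hu.const_mul (K1 u)⁻¹
      refine this.congr (.of_forall fun v => ?_)
      simp only
      field_simp
    have : (∫ u, ∫ v, K u v) = 0 := by
      rw [integral_eq_zero_of_ae]
      filter_upwards [hae] with u hu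
      simp [hKfact, hu]
    rw [this] at hKtotal
    norm_num at hKtotal
  have hK2sqi : Integrable (fun v => K2 v ^ 2) := by
    have := hK2i.bdd_mul (f := K2) hK2m.aestronglyMeasurable (.of_forall hK2b)
    simpa only [sq] using this
  -- the law
  set μ := (volume : Measure ((Fin d1 → ℝ) × (Fin d2 → ℝ))).withDensity
          (fun p => ENNReal.ofReal (fXY p.1 p.2)) with hμ
  have hWm : ∀ i, Measurable (fun ω => (X i ω, Y i ω)) := fun i => (hXmeas i).prodMk (hYmeas i)
  have : IsProbabilityMeasure μ := by
    rw [← hdens ⟨0, hn0⟩]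
    exact Measure.isProbabilityMeasure_map (hWm _).aemeasurable
  have hfXm : Measurable fX := by
    have : fX = fun u => ∫ v, fXY u v := funext hfX
    rw [this]
    exact hfXYmeas.stronglyMeasurable.integral_prod_right.measurable
  have hkn0 : 0 < kn := by linarith
  have hxV : x ∈ Vn := by
    rw [hVn]; intro i; simp; positivity
  have hfXV : ∀ t ∈ Vn, δ ≤ fX t := fun t ht => hδ.1 ⟨t, ht, rfl⟩
  have hfXnn : ∀ u, 0 ≤ fX u := fun u => by
    rw [hfX]; exact integral_nonneg (hfXYnonneg u)
  have hfnn : ∀ u v, 0 ≤ f u v := fun u v => by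
    rw [hf]; exact div_nonneg (hfXYnonneg u v) (hfXnn u)
  have hfle : ∀ t ∈ Vn, ∀ y, f t y ≤ Fsup := fun t ht y => hFsup.1 ⟨t, ht, y, rfl⟩
  have hFs0 : 0 ≤ Fsup := (hfnn x 0).trans (hfle x hxV 0)
  have hsupp : ∀ u, K1 (fun i => (x - u) i / h.1 i) ≠ 0 → u ∈ Vn := by
    intro u hu
    rw [hVn]
    intro i
    have h1 : |(x - u) i / h.1 i| ≤ A := by
      by_contra! hlt
      exact hu (hK1supp _ ⟨i, hlt⟩)
    rw [abs_div, abs_of_pos (hh1 i), div_le_iff₀ (hh1 i)] at h1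
    rw [abs_sub_comm]
    calc |x i - u i| ≤ A * h.1 i := h1
      _ ≤ A * (1 / kn) := by gcongr; exact hhkn i
      _ ≤ 2 * A / kn := by
        rw [mul_one_div]; gcongr; linarith
  have hfXne : ∀ u, K1 (fun i => (x - u) i / h.1 i) ≠ 0 → 0 < fX u := fun u hu =>
    hδpos.trans_le (hfXV u (hsupp u hu))
  -- the two factors of the summand
  set c := (H1 * H2)⁻¹ with hc
  have hc0 : 0 < c := by positivity
  set a : (Fin d1 → ℝ) → ℝ := fun u => c * K1 (fun i => (x - u) i / h.1 i) / fX u with ha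
  set k : (Fin d2 → ℝ) → ℝ := fun v => K2 (fun j => v j / h.2 j) with hk
  have ham : Measurable a := by
    refine Measurable.div (Measurable.const_mul (hK1m.comp ?_) _) hfXm
    exact (krlb_meas_div h.1).comp (measurable_const.sub measurable_id)
  have hkm : Measurable k := hK2m.comp (krlb_meas_div h.2)
  have hkb : ∀ v, |k v| ≤ Mb / |K1 u0| := fun v => hK2b _
  have hki : Integrable k := krlb_integrable_scale h.2 hh2 K2 hK2m hK2i
  have hk2i : Integrable (fun v => k v ^ 2) :=
    krlb_integrable_scale h.2 hh2 (fun v => K2 v ^ 2) (hK2m.pow_const 2) hK2sqi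
  have hab : ∀ u, |a u| ≤ c * (Mb / |K2 v0|) / δ := by
    intro u
    by_cases hz : K1 (fun i => (x - u) i / h.1 i) = 0
    · simp only [ha, hz]; simp; positivity
    · simp only [ha]
      rw [abs_div, abs_mul, abs_of_pos hc0, abs_of_pos (hfXne u hz)]
      gcongr
      · exact hK1b _
      · exact hfXV u (hsupp u hz)
  set Ma := c * (Mb / |K2 v0|) / δ with hMa
  have hMa0 : 0 ≤ Ma := by positivity
  set Z : (Fin d1 → ℝ) × (Fin d2 → ℝ) → (Fin d2 → ℝ) → ℝ := fun p y => a p.1 * k (y - p.2) with hZ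
  have hZm : Measurable (Function.uncurry Z) :=
    (ham.comp (measurable_fst.comp measurable_fst)).mul
      (hkm.comp (measurable_snd.sub (measurable_snd.comp measurable_fst)))
  have hZb : ∀ p y, |Z p y| ≤ Ma * (Mb / |K1 u0|) := by
    intro p y
    simp only [hZ]
    rw [abs_mul]
    exact mul_le_mul (hab _) (hkb _) (abs_nonneg _) hMa0
  have ha2b : ∀ u, |a u ^ 2| ≤ Ma ^ 2 := by
    intro u
    rw [abs_pow]
    exact pow_le_pow_left₀ (abs_nonneg _) (hab u) 2
  obtain ⟨hZ2, hZ2e⟩ := krlb_prod μ (fun u => a u ^ 2) (ham.pow_const 2) _ ha2b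
    (fun v => k v ^ 2) (hkm.pow_const 2) hk2i
  have hZsq : ∀ (p : (Fin d1 → ℝ) × (Fin d2 → ℝ)) y, Z p y ^ 2 = a p.1 ^ 2 * k (y - p.2) ^ 2 := by
    intro p y; simp only [hZ]; ring
  have hfxm : Measurable (f x) := by
    have : f x = fun y => fXY x y / fX x := funext (hf x)
    rw [this]
    exact (hfXYmeas.comp measurable_prodMk_left).div_const _
  have hfxi : Integrable (f x) := by
    have h1 : Integrable (fXY x) := by
      by_contra hni
      have h2 := hfXV x hxV
      rw [hfX, integral_undef hni] at h2
      linarith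
    have : f x = fun y => fXY x y / fX x := funext (hf x)
    rw [this]
    exact h1.div_const _
  have hfx2 : Integrable (fun y => f x y ^ 2) := by
    have := hfxi.bdd_mul (f := f x) (c := Fsup) hfxm.aestronglyMeasurable
      (.of_forall fun y => by rw [Real.norm_of_nonneg (hfnn x y)]; exact hfle x hxV y)
    simpa only [sq] using this
  obtain ⟨hm2, hmain⟩ := krlb_bias_var P μ n hn0 (fun i ω => (X i ω, Y i ω)) hWm hdens hiid
    Z hZm _ hZb (by simpa only [hZsq] using hZ2) (f x) hfxm hfx2
  have hKhZ : ∀ u v y, Kh h (x - u) (y - v) / fX u = Z (u, v) y := by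
    intro u v y
    simp only [hKh, hZ, ha, hk, hKfact, hc, hH1, hH2]
    ring
  have hfh : ∀ ω y, fhat ω y = (n : ℝ)⁻¹ * ∑ i, Z (X i ω, Y i ω) y := by
    intro ω y
    rw [hfhat]
    simp only [hKhZ]
  have hmean : ∀ y, Khf x y = ∫ p, Z p y ∂μ := by
    intro y
    obtain ⟨h1, h2⟩ := krlb_dens fXY hfXYmeas hfXYnonneg μ hμ (fun p => Z p y)
      (hZm.comp measurable_prodMk_right) _ (fun p => hZb p y)
    rw [h2, hKhf, Measure.volume_eq_prod, integral_prod _ h1]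
    refine integral_congr_ae (.of_forall fun u => integral_congr_ae (.of_forall fun v => ?_))
    simp only
    rw [← hKhZ, hf]
    ring
  -- squared part
  have hsq : (∫ p, (∫ y, Z p y ^ 2) ∂μ)
      = c * nK2sq * (∫ s, (K1 s) ^ 2 / fX (fun i => x i - s i * h.1 i)) := by
    simp only [hZsq]
    rw [hZ2e, (krlb_marg fXY hfXYmeas hfXYnonneg μ hμ fX hfX _ (ham.pow_const 2) _ ha2b).2]
    have e1 : ∫ y, k y ^ 2 = H2 * nK2sq := by
      rw [hnK2sq]
      exact krlb_integral_scale h.2 hh2 (fun v => K2 v ^ 2) (hK2m.pow_const 2)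
    have e2 : ∫ u, fX u * a u ^ 2
        = c ^ 2 * (H1 * ∫ s, (K1 s) ^ 2 / fX (fun i => x i - s i * h.1 i)) := by
      rw [hH1, ← krlb_integral_scale h.1 hh1
        (fun s => (K1 s) ^ 2 / fX (fun i => x i - s i * h.1 i))
        ((hK1m.pow_const 2).div (hfXm.comp (by fun_prop))), ← integral_const_mul,
        ← integral_sub_left_eq_self (fun w : Fin d1 → ℝ => c ^ 2 *
          (K1 (fun i => w i / h.1 i) ^ 2 / fX (fun i => x i - w i / h.1 i * h.1 i))) _ x]
      refine integral_congr_ae (.of_forall fun u => ?_)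
      simp only [ha]
      have e3 : (fun i => x i - (x - u) i / h.1 i * h.1 i) = u := by
        ext i
        rw [div_mul_cancel₀ _ (hh1 i).ne']
        simp
      rw [e3]
      by_cases hz : fX u = 0
      · simp [hz]
      · field_simp
    rw [e1, e2, hc]
    field_simp
  have hNeq : (∫ u, fX u * |a u|) * ∫ v, |k v| = nK1 := by
    have e1 : ∫ v, |k v| = H2 * ∫ v, |K2 v| :=
      krlb_integral_scale h.2 hh2 (fun v => |K2 v|) hK2m.abs
    have e2 : ∫ u, fX u * |a u| = c * (H1 * ∫ s, |K1 s|) := by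
      rw [hH1, ← krlb_integral_scale h.1 hh1 (fun s => |K1 s|) hK1m.abs, ← integral_const_mul,
        ← integral_sub_left_eq_self (fun u : Fin d1 → ℝ => c * |K1 fun i => u i / h.1 i|) _ x]
      refine integral_congr_ae (.of_forall fun u => ?_)
      simp only [ha]
      by_cases hz : K1 (fun i => (x - u) i / h.1 i) = 0
      · rw [hz]; simp
      · have := hfXne u hz
        rw [abs_div, abs_mul, abs_of_pos hc0, abs_of_pos this]
        field_simp
    rw [e1, e2, hnK1]
    simp only [hKfact, abs_mul, integral_const_mul, integral_mul_const, hc]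
    field_simp
  have hL2 := krlb_L2 fXY hfXYmeas hfXYnonneg μ hμ fX hfX a ham Ma hab k hkm hki _ hkb Fsup hFs0
    (by
      intro u v hau
      have hz : K1 (fun i => (x - u) i / h.1 i) ≠ 0 := by
        intro hz; apply hau; simp only [ha, hz]; simp
      have h1 := hfle u (hsupp u hz) v
      rwa [hf, div_le_iff₀ (hfXne u hz)] at h1) hm2
  rw [hNeq] at hL2
  simp only [hfh, hmean]
  rw [hmain, hsq]
  have h5 : (n : ℝ)⁻¹ * (∫ y, (∫ p, Z p y ∂μ) ^ 2) ≤ (n : ℝ)⁻¹ * (nK1 ^ 2 * Fsup) := by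
    gcongr
  have h6 : nK2sq / (n * (H1 * H2)) = (n : ℝ)⁻¹ * (c * nK2sq) := by
    rw [hc]; field_simp
  rw [h6, div_eq_inv_mul (nK1 ^ 2 * Fsup)]
  linarith
end

section
/- Assume (H1), that K(u,v) = K⁽¹⁾(u)K⁽²⁾(v) with K⁽¹⁾ supported in [−A,A]^{d1}, and that f_X is positive and continuous on a neighborhood of x. Let (h⁽ⁿ⁾)_n be bandwidths with max_i h_i⁽ⁿ⁾ → 0 as n → ∞. Then R_x²(f̂_{h⁽ⁿ⁾},2) ≥ ‖K_{h⁽ⁿ⁾}*f − f‖²_{x,2} + (‖K‖₂² / (f_X(x) n ∏_{i=1}^d h_i⁽ⁿ⁾))·(1+o(1)) + O(1/n) as n → ∞; precisely, for every ε > 0 there exist N ∈ ℕ and a constant C depending only on ‖K‖₁ and ‖f‖_∞ such that for all n ≥ N, R_x²(f̂_{h⁽ⁿ⁾},2) ≥ ‖K_{h⁽ⁿ⁾}*f − f‖²_{x,2} + (1−ε)‖K‖₂² / (f_X(x) n ∏_{i=1}^d h_i⁽ⁿ⁾) − C/n. -/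
open MeasureTheory ProbabilityTheory Filter

lemma biasVar_pt {Ω E : Type*} [MeasurableSpace Ω] [MeasurableSpace E]
    (P : Measure Ω) [IsProbabilityMeasure P] (μ : Measure E) [IsProbabilityMeasure μ]
    (Z : ℕ → Ω → E) (hZ : ∀ i, Measurable (Z i)) (hlaw : ∀ i, P.map (Z i) = μ)
    (hind : iIndepFun Z P) (w : E → ℝ) (hw : Measurable w) (B : ℝ) (hB : ∀ p, |w p| ≤ B)
    (c : ℝ) (n : ℕ) (hn : 0 < n) :
    ∫ ω, ((n : ℝ)⁻¹ * ∑ i ∈ Finset.range n, w (Z i ω) - c) ^ 2 ∂P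
      = ((∫ p, w p ∂μ) - c) ^ 2 + (n : ℝ)⁻¹ * ((∫ p, w p ^ 2 ∂μ) - (∫ p, w p ∂μ) ^ 2) := by
  have hn' : (n : ℝ) ≠ 0 := by positivity
  have hwL : MemLp w 2 μ :=
    MemLp.of_bound hw.aestronglyMeasurable B (ae_of_all _ fun p => by simpa using hB p)
  have hi : ∀ i, MemLp (fun ω => w (Z i ω)) 2 P := fun i =>
    MemLp.of_bound (hw.comp (hZ i)).aestronglyMeasurable B
      (ae_of_all _ fun p => by simpa using hB _)
  have hE : ∀ i, ∫ ω, w (Z i ω) ∂P = ∫ p, w p ∂μ := fun i => by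
    rw [← hlaw i, integral_map (hZ i).aemeasurable hw.aestronglyMeasurable]
  have hV : ∀ i, Var[fun ω => w (Z i ω); P] = Var[w; μ] := fun i => by
    rw [← hlaw i, variance_map hw.aemeasurable (hZ i).aemeasurable]; rfl
  have hvs : Var[∑ i ∈ Finset.range n, (fun ω => w (Z i ω)); P] = n * Var[w; μ] := by
    rw [IndepFun.variance_sum (fun i _ => hi i)]
    · simp [hV]
    · intro i _ j _ hij
      exact (hind.indepFun hij).comp hw hw
  have hSm : MemLp (fun ω => ∑ i ∈ Finset.range n, w (Z i ω)) 2 P :=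
    memLp_finsetSum _ (fun i _ => hi i)
  have hS : MemLp (fun ω => (n : ℝ)⁻¹ * ∑ i ∈ Finset.range n, w (Z i ω)) 2 P :=
    hSm.const_mul _
  have hT : MemLp (fun ω => (n : ℝ)⁻¹ * ∑ i ∈ Finset.range n, w (Z i ω) - c) 2 P :=
    hS.sub (memLp_const c)
  have h1 := variance_eq_sub hT
  rw [variance_sub_const hS.aestronglyMeasurable, variance_const_mul] at h1
  have h2 : Var[fun ω => ∑ i ∈ Finset.range n, w (Z i ω); P] = n * Var[w; μ] := by
    rw [← hvs]; congr 1; ext ω; simp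
  have h3 : ∫ ω, ((n : ℝ)⁻¹ * ∑ i ∈ Finset.range n, w (Z i ω) - c) ∂P = (∫ p, w p ∂μ) - c := by
    rw [integral_sub (hS.integrable (by norm_num)) (integrable_const _), integral_const_mul,
      integral_finsetSum _ (fun i _ => (hi i).integrable (by norm_num))]
    simp [hE, hn']
  rw [h2, h3, variance_eq_sub hwL] at h1
  simp only [Pi.pow_apply] at h1
  have : ((n : ℝ)⁻¹) ^ 2 * (n * ((∫ p, w p ^ 2 ∂μ) - (∫ p, w p ∂μ) ^ 2))
    = (n : ℝ)⁻¹ * ((∫ p, w p ^ 2 ∂μ) - (∫ p, w p ∂μ) ^ 2) := by field_simp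
  linarith

lemma biasVar {Ω E F : Type*} [MeasurableSpace Ω] [MeasurableSpace E] [MeasurableSpace F]
    (P : Measure Ω) [IsProbabilityMeasure P] (μ : Measure E) [IsProbabilityMeasure μ]
    (ν : Measure F) [SFinite ν]
    (Z : ℕ → Ω → E) (hZ : ∀ i, Measurable (Z i)) (hlaw : ∀ i, P.map (Z i) = μ)
    (hind : iIndepFun Z P) (W : E → F → ℝ) (hW : Measurable (Function.uncurry W))
    (B : ℝ) (hB : ∀ p y, |W p y| ≤ B)
    (hW2 : Integrable (fun q : E × F => W q.1 q.2 ^ 2) (μ.prod ν))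
    (φ : F → ℝ) (hφ : MemLp φ 2 ν) (n : ℕ) (hn : 0 < n) :
    ∫ ω, ∫ y, ((n : ℝ)⁻¹ * ∑ i ∈ Finset.range n, W (Z i ω) y - φ y) ^ 2 ∂ν ∂P
      = (∫ y, ((∫ p, W p y ∂μ) - φ y) ^ 2 ∂ν)
        + (n : ℝ)⁻¹ * ((∫ q : E × F, W q.1 q.2 ^ 2 ∂(μ.prod ν)) - ∫ y, (∫ p, W p y ∂μ) ^ 2 ∂ν) := by
  have hWL : MemLp (fun q : E × F => W q.1 q.2) 2 (μ.prod ν) :=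
    (memLp_two_iff_integrable_sq hW.aestronglyMeasurable).2 hW2
  have hWy : ∀ y, Measurable (fun p => W p y) := fun y =>
    hW.comp (measurable_id.prodMk measurable_const)
  have hgm : AEStronglyMeasurable (fun y => ∫ p, W p y ∂μ) ν := by
    have := (hW.comp measurable_swap).stronglyMeasurable.integral_prod_right' (ν := μ)
    exact this.aestronglyMeasurable
  have hsqi : Integrable (fun y => ∫ p, W p y ^ 2 ∂μ) ν := hW2.integral_prod_right
  have hgsq : Integrable (fun y => (∫ p, W p y ∂μ) ^ 2) ν := by
    refine hsqi.mono' (hgm.pow 2) (ae_of_all _ fun y => ?_)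
    have hwL : MemLp (fun p => W p y) 2 μ :=
      MemLp.of_bound (hWy y).aestronglyMeasurable B (ae_of_all _ fun p => by simpa using hB p y)
    have h0 := variance_nonneg (fun p => W p y) μ
    rw [variance_eq_sub hwL] at h0
    simp only [Pi.pow_apply] at h0
    rw [Real.norm_of_nonneg (sq_nonneg _)]
    linarith
  have hgL : MemLp (fun y => ∫ p, W p y ∂μ) 2 ν := (memLp_two_iff_integrable_sq hgm).2 hgsq
  have hint : Integrable (Function.uncurry fun ω y =>
      ((n : ℝ)⁻¹ * ∑ i ∈ Finset.range n, W (Z i ω) y - φ y) ^ 2) (P.prod ν) := by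
    have hi : ∀ i, MemLp (fun q : Ω × F => W (Z i q.1) q.2) 2 (P.prod ν) := fun i => by
      have hmp : MeasurePreserving (Prod.map (Z i) id) (P.prod ν) (μ.prod ν) :=
        MeasurePreserving.prod ⟨hZ i, hlaw i⟩ (MeasurePreserving.id ν)
      exact hWL.comp_measurePreserving hmp
    have hφ' : MemLp (fun q : Ω × F => φ q.2) 2 (P.prod ν) :=
      hφ.comp_measurePreserving measurePreserving_snd
    exact (((memLp_finsetSum _ (fun i _ => hi i)).const_mul _).sub hφ').integrable_sq
  rw [integral_integral_swap hint]
  simp_rw [biasVar_pt P μ Z hZ hlaw hind (fun p => W p _) (hWy _) B (fun p => hB p _) _ n hn]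
  rw [integral_add, integral_const_mul, integral_sub hsqi hgsq, integral_prod_symm _ hW2]
  · exact (hgL.sub hφ).integrable_sq
  · exact (hsqi.sub hgsq).const_mul _

lemma lintegral_scale {d : ℕ} (h : Fin d → ℝ) (hh : ∀ i, 0 < h i)
    (G : (Fin d → ℝ) → ENNReal) (hG : Measurable G) :
    ∫⁻ u : Fin d → ℝ, G (fun i => u i / h i) = ENNReal.ofReal (∏ i, h i) * ∫⁻ u, G u := by
  have hp : 0 < ∏ i, h i := Finset.prod_pos fun i _ => hh i
  have key := Real.smul_map_diagonal_volume_pi (D := fun i => (h i)⁻¹) (by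
    rw [Matrix.det_diagonal, Finset.prod_inv_distrib]; positivity)
  rw [Matrix.det_diagonal, Finset.prod_inv_distrib, abs_of_pos (by positivity)] at key
  conv_rhs => rw [← key]
  rw [lintegral_smul_measure, lintegral_map hG (by
    exact (LinearMap.continuous_of_finiteDimensional _).measurable), smul_eq_mul, ← mul_assoc, ← ENNReal.ofReal_mul hp.le,
    mul_inv_cancel₀ hp.ne', ENNReal.ofReal_one, one_mul]
  refine lintegral_congr fun u => ?_
  congr 1
  ext i
  simp [Matrix.mulVec_diagonal, div_eq_inv_mul]

lemma lint_law {d1 d2 : ℕ}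
    (fXY : (Fin d1 → ℝ) → (Fin d2 → ℝ) → ℝ)
    (hfXYmeas : Measurable (Function.uncurry fXY)) (hfXYnonneg : ∀ u v, 0 ≤ fXY u v)
    (fX : (Fin d1 → ℝ) → ℝ) (hfX : ∀ u, fX u = ∫ v, fXY u v)
    (G : (Fin d1 → ℝ) → (Fin d2 → ℝ) → ENNReal) (hG : Measurable (Function.uncurry G))
    (w : (Fin d1 → ℝ) → ENNReal) (hw : Measurable w)
    (hgood : ∀ u, (∀ y, G u y = 0) ∨ 0 < fX u) :
    ∫⁻ p, (∫⁻ y, G p.1 (y - p.2) * w p.1)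
      ∂((volume : Measure ((Fin d1 → ℝ) × (Fin d2 → ℝ))).withDensity
          (fun p => ENNReal.ofReal (fXY p.1 p.2)))
      = ∫⁻ u, (∫⁻ y, G u y) * (w u * ENNReal.ofReal (fX u)) := by
  have hGu : ∀ u, Measurable (G u) := fun u => hG.comp (measurable_const.prodMk measurable_id)
  have hin : ∀ p : (Fin d1 → ℝ) × (Fin d2 → ℝ),
      ∫⁻ y, G p.1 (y - p.2) * w p.1 = (∫⁻ y, G p.1 y) * w p.1 := fun p => by
    rw [lintegral_mul_const _ (by exact (hGu p.1).comp (measurable_id.sub_const _)),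
      lintegral_sub_right_eq_self (G p.1)]
  simp_rw [hin]
  have hGi : Measurable (fun u => ∫⁻ y, G u y) := hG.lintegral_prod_right'
  have hfm : Measurable (fun p : (Fin d1 → ℝ) × (Fin d2 → ℝ) => ENNReal.ofReal (fXY p.1 p.2)) :=
    ENNReal.measurable_ofReal.comp hfXYmeas
  have hm2 : Measurable (fun p : (Fin d1 → ℝ) × (Fin d2 → ℝ) => (∫⁻ y, G p.1 y) * w p.1) :=
    (hGi.comp measurable_fst).mul (hw.comp measurable_fst)
  rw [lintegral_withDensity_eq_lintegral_mul _ hfm hm2, Measure.volume_eq_prod,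
    lintegral_prod _ (hfm.mul hm2).aemeasurable]
  refine lintegral_congr fun u => ?_
  simp only [Pi.mul_apply]
  rw [lintegral_mul_const _ (by exact hfm.comp (measurable_const.prodMk measurable_id))]
  rcases hgood u with h | h
  · simp [h]
  · have hint : Integrable (fXY u) := by
      by_contra hc
      rw [hfX, integral_undef hc] at h
      exact lt_irrefl _ h
    rw [hfX u, ofReal_integral_eq_lintegral_ofReal hint (ae_of_all _ (hfXYnonneg u))]
    ring

lemma lint_shift {d1 d2 : ℕ} (x : Fin d1 → ℝ)
    (H : (Fin d1 → ℝ) → (Fin d2 → ℝ) → ENNReal) :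
    ∫⁻ u, ∫⁻ y, H (x - u) y = ∫⁻ u, ∫⁻ y, H u y :=
  lintegral_sub_left_eq_self (fun u => ∫⁻ y, H u y) x

lemma core {Ω : Type*} [MeasurableSpace Ω] (P : Measure Ω) [IsProbabilityMeasure P]
    (d1 d2 : ℕ)
    (X : ℕ → Ω → (Fin d1 → ℝ)) (Y : ℕ → Ω → (Fin d2 → ℝ))
    (hXmeas : ∀ i, Measurable (X i)) (hYmeas : ∀ i, Measurable (Y i))
    (fXY : (Fin d1 → ℝ) → (Fin d2 → ℝ) → ℝ)
    (hfXYmeas : Measurable (Function.uncurry fXY)) (hfXYnonneg : ∀ u v, 0 ≤ fXY u v)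
    (hdens : ∀ i, Measure.map (fun ω => (X i ω, Y i ω)) P
      = (volume : Measure ((Fin d1 → ℝ) × (Fin d2 → ℝ))).withDensity
          (fun p => ENNReal.ofReal (fXY p.1 p.2)))
    (hiid : iIndepFun (fun i ω => (X i ω, Y i ω)) P)
    (fX : (Fin d1 → ℝ) → ℝ) (hfX : ∀ u, fX u = ∫ v, fXY u v)
    (x : Fin d1 → ℝ) (φ : (Fin d2 → ℝ) → ℝ) (hφ : MemLp φ 2)
    (k : (Fin d1 → ℝ) → (Fin d2 → ℝ) → ℝ) (hk : Measurable (Function.uncurry k))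
    (Mb : ℝ) (hMb : ∀ u v, |k u v| ≤ Mb)
    (a b : ℝ) (ha0 : 0 ≤ a) (hb0 : 0 ≤ b)
    (ha : ∫⁻ u, ∫⁻ v, ENNReal.ofReal |k u v| = ENNReal.ofReal a)
    (hb : ∫⁻ u, ∫⁻ v, ENNReal.ofReal (k u v ^ 2) = ENNReal.ofReal b)
    (c lam Fs : ℝ) (hc : 0 < c) (hFs : 0 ≤ Fs)
    (hgood : ∀ u, (∀ v, k (x - u) v = 0) ∨
      (c ≤ fX u ∧ lam ≤ (fX u)⁻¹ ∧ ∀ v, fXY u v / fX u ≤ Fs))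
    (n : ℕ) (hn : 0 < n) :
    (∫ y, ((∫ u, ∫ v, k (x - u) (y - v) * (fXY u v / fX u)) - φ y) ^ 2)
      + (n : ℝ)⁻¹ * (lam * b - Fs * a * a)
    ≤ ∫ ω, (∫ y, ((n : ℝ)⁻¹ * ∑ i ∈ Finset.range n,
          k (x - X i ω) (y - Y i ω) / fX (X i ω) - φ y) ^ 2) ∂P := by
  set μ := (volume : Measure ((Fin d1 → ℝ) × (Fin d2 → ℝ))).withDensity
          (fun p => ENNReal.ofReal (fXY p.1 p.2)) with hμ
  have hZ : ∀ i, Measurable (fun ω => (X i ω, Y i ω)) := fun i => (hXmeas i).prodMk (hYmeas i)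
  have : IsProbabilityMeasure μ := by
    rw [← hdens 0]; exact Measure.isProbabilityMeasure_map (hZ 0).aemeasurable
  have hfXm : Measurable fX := by
    have : fX = fun u => ∫ v, fXY u v := funext hfX
    rw [this]
    exact (hfXYmeas.stronglyMeasurable.integral_prod_right' (ν := volume)).measurable
  have hfXnn : ∀ u, 0 ≤ fX u := fun u => by
    rw [hfX]; exact integral_nonneg (hfXYnonneg u)
  have hfm : Measurable (fun p : (Fin d1 → ℝ) × (Fin d2 → ℝ) => ENNReal.ofReal (fXY p.1 p.2)) :=
    ENNReal.measurable_ofReal.comp hfXYmeas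
  have hfm1 : Measurable (fun p : (Fin d1 → ℝ) × (Fin d2 → ℝ) => fXY p.1 p.2) := hfXYmeas
  let W : (Fin d1 → ℝ) × (Fin d2 → ℝ) → (Fin d2 → ℝ) → ℝ :=
    fun p y => k (x - p.1) (y - p.2) / fX p.1
  have hkm : ∀ {α : Type} [MeasurableSpace α] (p : α → (Fin d1 → ℝ)) (q : α → (Fin d2 → ℝ)),
      Measurable p → Measurable q → Measurable (fun t => k (p t) (q t)) :=
    fun p q hp hq => hk.comp (hp.prodMk hq)
  have hW : Measurable (Function.uncurry W) := by
    refine Measurable.div (hkm (fun q : ((Fin d1 → ℝ) × (Fin d2 → ℝ)) × (Fin d2 → ℝ) => x - q.1.1)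
      (fun q => q.2 - q.1.2) ?_ ?_) (hfXm.comp ?_) <;> fun_prop
  have hWb : ∀ p y, |W p y| ≤ Mb / c := by
    intro p y
    have hMb0 : 0 ≤ Mb := (abs_nonneg _).trans (hMb 0 0)
    rcases hgood p.1 with h | ⟨h, -, -⟩
    · simp only [W, h, zero_div, abs_zero]; positivity
    · simp only [W]
      rw [abs_div, abs_of_pos (hc.trans_le h)]
      exact div_le_div₀ hMb0 (hMb _ _) hc h
  have hgood' : ∀ u, (∀ v, k (x - u) v = 0) ∨ 0 < fX u := fun u =>
    (hgood u).imp id (fun h => hc.trans_le h.1)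
  -- second moment
  have hW2m : Measurable (fun q : ((Fin d1 → ℝ) × (Fin d2 → ℝ)) × (Fin d2 → ℝ) =>
      W q.1 q.2 ^ 2) := hW.pow_const 2
  have hL2 : ∫⁻ q, ENNReal.ofReal (W q.1 q.2 ^ 2) ∂(μ.prod volume)
      = ∫⁻ u, (∫⁻ y, ENNReal.ofReal (k (x - u) y ^ 2)) *
          (ENNReal.ofReal ((fX u)⁻¹ ^ 2) * ENNReal.ofReal (fX u)) := by
    rw [lintegral_prod _ (hW2m.ennreal_ofReal).aemeasurable]
    rw [← lint_law fXY hfXYmeas hfXYnonneg fX hfX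
      (fun u y => ENNReal.ofReal (k (x - u) y ^ 2)) _
      (fun u => ENNReal.ofReal ((fX u)⁻¹ ^ 2)) (hfXm.inv.pow_const 2).ennreal_ofReal
      (fun u => (hgood' u).imp (fun h y => by simp [h]) id)]
    · refine lintegral_congr fun p => lintegral_congr fun y => ?_
      rw [← ENNReal.ofReal_mul (sq_nonneg _)]
      simp only [W]; congr 1; rw [div_eq_mul_inv, mul_pow]
    · exact ((hkm (fun q : (Fin d1 → ℝ) × (Fin d2 → ℝ) => x - q.1) (fun q => q.2)
        (by fun_prop) (by fun_prop)).pow_const 2).ennreal_ofReal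
  have hbx : ∫⁻ u, ∫⁻ y, ENNReal.ofReal (k (x - u) y ^ 2) = ENNReal.ofReal b := by
    rw [← hb]; exact lint_shift x (fun u y => ENNReal.ofReal (k u y ^ 2))
  have hax : ∫⁻ u, ∫⁻ y, ENNReal.ofReal |k (x - u) y| = ENNReal.ofReal a := by
    rw [← ha]; exact lint_shift x (fun u y => ENNReal.ofReal |k u y|)
  have hL2up : ∫⁻ q, ENNReal.ofReal (W q.1 q.2 ^ 2) ∂(μ.prod volume) < ⊤ := by
    rw [hL2]
    calc _ ≤ ∫⁻ u, (∫⁻ y, ENNReal.ofReal (k (x - u) y ^ 2)) * ENNReal.ofReal c⁻¹ := by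
          refine lintegral_mono fun u => ?_
          rcases hgood u with h | ⟨h, -, -⟩
          · simp [h]
          · have h0 := hc.trans_le h
            dsimp only
            gcongr
            rw [← ENNReal.ofReal_mul (sq_nonneg _)]
            apply ENNReal.ofReal_le_ofReal
            rw [pow_two, mul_assoc, inv_mul_cancel₀ h0.ne', mul_one]
            gcongr
      _ = ENNReal.ofReal b * ENNReal.ofReal c⁻¹ := by
          rw [lintegral_mul_const' _ _ ENNReal.ofReal_ne_top, hbx]
      _ < ⊤ := ENNReal.mul_lt_top ENNReal.ofReal_lt_top ENNReal.ofReal_lt_top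
  have hL2low : ENNReal.ofReal (lam * b) ≤ ∫⁻ q, ENNReal.ofReal (W q.1 q.2 ^ 2) ∂(μ.prod volume) := by
    rw [hL2]
    calc ENNReal.ofReal (lam * b) = ∫⁻ u, (∫⁻ y, ENNReal.ofReal (k (x - u) y ^ 2)) * ENNReal.ofReal lam := by
          rw [lintegral_mul_const' _ _ ENNReal.ofReal_ne_top, hbx, ← ENNReal.ofReal_mul hb0, mul_comm]
      _ ≤ _ := by
          refine lintegral_mono fun u => ?_
          rcases hgood u with h | ⟨h, h2, -⟩
          · simp [h]
          · have h0 := hc.trans_le h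
            dsimp only
            gcongr
            rw [← ENNReal.ofReal_mul (sq_nonneg _)]
            apply ENNReal.ofReal_le_ofReal
            rw [pow_two, mul_assoc, inv_mul_cancel₀ h0.ne', mul_one]
            exact h2
  have hW2 : Integrable (fun q : ((Fin d1 → ℝ) × (Fin d2 → ℝ)) × (Fin d2 → ℝ) =>
      W q.1 q.2 ^ 2) (μ.prod volume) := by
    refine ⟨hW2m.aestronglyMeasurable, ?_⟩
    rw [hasFiniteIntegral_iff_ofReal (ae_of_all _ fun q => sq_nonneg _)]
    exact hL2up
  have hI2 : lam * b ≤ ∫ q, W q.1 q.2 ^ 2 ∂(μ.prod volume) := by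
    rw [← ofReal_integral_eq_lintegral_ofReal hW2 (ae_of_all _ fun q => sq_nonneg _)] at hL2low
    exact (ENNReal.ofReal_le_ofReal_iff (integral_nonneg fun q => sq_nonneg _)).1 hL2low
  -- the mean
  have hWy : ∀ y, Measurable (fun p => W p y) := fun y =>
    hW.comp (measurable_id.prodMk measurable_const)
  have hg : ∀ y, ∫ p, W p y ∂μ = ∫ u, ∫ v, k (x - u) (y - v) * (fXY u v / fX u) := by
    intro y
    have hint : Integrable (fun p => W p y) μ :=
      Integrable.of_bound (hWy y).aestronglyMeasurable (Mb / c)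
        (ae_of_all _ fun p => by simpa using hWb p y)
    rw [hμ, integrable_withDensity_iff_integrable_smul' hfm
      (ae_of_all _ fun _ => ENNReal.ofReal_lt_top)] at hint
    rw [hμ, integral_withDensity_eq_integral_toReal_smul hfm
      (ae_of_all _ fun _ => ENNReal.ofReal_lt_top)]
    rw [Measure.volume_eq_prod] at hint ⊢
    rw [integral_prod _ hint]
    refine integral_congr_ae (ae_of_all _ fun u => integral_congr_ae (ae_of_all _ fun v => ?_))
    simp only [W, smul_eq_mul]
    rw [ENNReal.toReal_ofReal (hfXYnonneg u v)]
    ring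
  have hE1 : ∀ y, ‖∫ p, W p y ∂μ‖ₑ ≤ ∫⁻ p, ENNReal.ofReal |W p y| ∂μ := fun y => by
    refine (enorm_integral_le_lintegral_enorm _).trans (le_of_eq ?_)
    exact lintegral_congr fun p => Real.enorm_eq_ofReal_abs _
  have hE2 : ∀ y, ∫⁻ p, ENNReal.ofReal |W p y| ∂μ ≤ ENNReal.ofReal (Fs * a) := by
    intro y
    have hm := (hWy y).abs.ennreal_ofReal
    rw [hμ, lintegral_withDensity_eq_lintegral_mul _ hfm hm, Measure.volume_eq_prod,
      lintegral_prod _ (hfm.mul hm).aemeasurable]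
    calc _ ≤ ∫⁻ u, ∫⁻ v, ENNReal.ofReal Fs * ENNReal.ofReal |k (x - u) (y - v)| := by
          refine lintegral_mono fun u => lintegral_mono fun v => ?_
          simp only [Pi.mul_apply, W]
          rw [← ENNReal.ofReal_mul (hfXYnonneg _ _), ← ENNReal.ofReal_mul hFs]
          apply ENNReal.ofReal_le_ofReal
          rcases hgood u with h | ⟨h, -, h2⟩
          · simp [h]
          · rw [abs_div, abs_of_pos (hc.trans_le h)]
            calc _ = (fXY u v / fX u) * |k (x - u) (y - v)| := by ring
              _ ≤ _ := by gcongr; exact h2 v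
      _ = ENNReal.ofReal Fs * ∫⁻ u, ∫⁻ v, ENNReal.ofReal |k (x - u) (y - v)| := by
          simp_rw [lintegral_const_mul' _ _ ENNReal.ofReal_ne_top]
      _ = _ := by
          rw [ENNReal.ofReal_mul hFs, ← hax]
          congr 1
          refine lintegral_congr fun u => ?_
          exact lintegral_sub_left_eq_self (fun v => ENNReal.ofReal |k (x - u) v|) y
  have hE3 : ∫⁻ y, ∫⁻ p, ENNReal.ofReal |W p y| ∂μ ≤ ENNReal.ofReal a := by
    rw [lintegral_lintegral_swap ((hW.comp measurable_swap).abs.ennreal_ofReal).aemeasurable]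
    have := lint_law fXY hfXYmeas hfXYnonneg fX hfX
      (fun u y => ENNReal.ofReal |k (x - u) y|) (by
        exact ((hkm (fun q : (Fin d1 → ℝ) × (Fin d2 → ℝ) => x - q.1) (fun q => q.2)
        (by fun_prop) (by fun_prop)).abs).ennreal_ofReal)
      (fun u => ENNReal.ofReal ((fX u)⁻¹)) (hfXm.inv).ennreal_ofReal
      (fun u => (hgood' u).imp (fun h y => by simp [h]) id)
    calc _ = _ := by
          refine lintegral_congr fun p => lintegral_congr fun y => ?_
          show _ = ENNReal.ofReal |k (x - p.1) (y - p.2)| * ENNReal.ofReal ((fX p.1)⁻¹)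
          rw [← ENNReal.ofReal_mul (abs_nonneg _)]
          simp only [W]; rw [abs_div, div_eq_mul_inv, abs_of_nonneg (hfXnn _)]
      _ = _ := this
      _ ≤ ∫⁻ u, ∫⁻ y, ENNReal.ofReal |k (x - u) y| := by
          refine lintegral_mono fun u => ?_
          rcases hgood' u with h | h
          · simp [h]
          · dsimp only
            rw [← ENNReal.ofReal_mul (by positivity), inv_mul_cancel₀ h.ne']
            simp
      _ = _ := hax
  have hg2 : ∫ y, (∫ p, W p y ∂μ) ^ 2 ≤ Fs * a * a := by
    have hgm : AEStronglyMeasurable (fun y => ∫ p, W p y ∂μ) volume := by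
      have := (hW.comp measurable_swap).stronglyMeasurable.integral_prod_right' (ν := μ)
      exact this.aestronglyMeasurable
    rw [integral_eq_lintegral_of_nonneg_ae (ae_of_all _ fun y => sq_nonneg _) (hgm.pow 2)]
    refine ENNReal.toReal_le_of_le_ofReal (by positivity) ?_
    calc _ ≤ ∫⁻ y, ENNReal.ofReal (Fs * a) * ∫⁻ p, ENNReal.ofReal |W p y| ∂μ := by
          refine lintegral_mono fun y => ?_
          dsimp only
          rw [← sq_abs, pow_two, ENNReal.ofReal_mul (abs_nonneg _), ← Real.enorm_eq_ofReal_abs]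
          exact mul_le_mul' ((hE1 y).trans (hE2 y)) (hE1 y)
      _ = ENNReal.ofReal (Fs * a) * ∫⁻ y, ∫⁻ p, ENNReal.ofReal |W p y| ∂μ :=
          lintegral_const_mul' _ _ ENNReal.ofReal_ne_top
      _ ≤ ENNReal.ofReal (Fs * a) * ENNReal.ofReal a := by gcongr
      _ = _ := by rw [← ENNReal.ofReal_mul (by positivity)]
  have main := biasVar P μ volume (fun i ω => (X i ω, Y i ω)) hZ hdens hiid W hW (Mb / c) hWb hW2
    φ hφ n hn
  simp_rw [hg] at main hg2
  change _ ≤ ∫ ω, (∫ y, ((n : ℝ)⁻¹ * ∑ i ∈ Finset.range n, W (X i ω, Y i ω) y - φ y) ^ 2) ∂P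
  rw [main]
  gcongr

lemma lint_dil {d1 d2 : ℕ} (h1 : Fin d1 → ℝ) (h2 : Fin d2 → ℝ) (hh1 : ∀ i, 0 < h1 i)
    (hh2 : ∀ i, 0 < h2 i)
    (H : (Fin d1 → ℝ) → (Fin d2 → ℝ) → ENNReal) (hH : Measurable (Function.uncurry H)) :
    ∫⁻ u : Fin d1 → ℝ, ∫⁻ v : Fin d2 → ℝ, H (fun i => u i / h1 i) (fun j => v j / h2 j)
      = ENNReal.ofReal ((∏ i, h1 i) * ∏ j, h2 j) * ∫⁻ u, ∫⁻ v, H u v := by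
  have hp1 : 0 < ∏ i, h1 i := Finset.prod_pos fun i _ => hh1 i
  have e : ∀ u, ∫⁻ v : Fin d2 → ℝ, H u (fun j => v j / h2 j)
      = ENNReal.ofReal (∏ j, h2 j) * ∫⁻ v, H u v := fun u =>
    lintegral_scale h2 hh2 (H u) (hH.comp (measurable_const.prodMk measurable_id))
  simp_rw [e]
  rw [lintegral_const_mul' _ _ ENNReal.ofReal_ne_top,
    lintegral_scale h1 hh1 (fun u => ∫⁻ v, H u v) hH.lintegral_prod_right',
    ENNReal.ofReal_mul hp1.le]
  ring

lemma ofReal_iter {d1 d2 : ℕ} (H : (Fin d1 → ℝ) → (Fin d2 → ℝ) → ℝ)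
    (hH : Integrable (fun p : (Fin d1 → ℝ) × (Fin d2 → ℝ) => H p.1 p.2))
    (h0 : ∀ u v, 0 ≤ H u v) :
    ∫⁻ u, ∫⁻ v, ENNReal.ofReal (H u v) = ENNReal.ofReal (∫ u, ∫ v, H u v) := by
  rw [Measure.volume_eq_prod] at hH
  rw [← integral_prod (fun p : (Fin d1 → ℝ) × (Fin d2 → ℝ) => H p.1 p.2) hH,
    ofReal_integral_eq_lintegral_ofReal hH (ae_of_all _ fun p => h0 _ _),
    lintegral_prod _ hH.aestronglyMeasurable.aemeasurable.ennreal_ofReal]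

/-- Proposition (lower bound for kernel rules), second part: when `f_X` is positive
and continuous near `x` and the bandwidths tend to `0`, the risk of the kernel
estimator is asymptotically bounded below by
`‖K_h*f − f‖²_{x,2} + ‖K‖₂²/(f_X(x) n ∏ h_i) (1+o(1)) + O(1/n)`. -/
theorem kernel_risk_lower_bound_asymptotic
    {Ω : Type*} [MeasurableSpace Ω] (P : Measure Ω) [IsProbabilityMeasure P]
    (d1 d2 : ℕ) (hd1 : 0 < d1) (hd2 : 0 < d2)
    -- an infinite i.i.d. sequence of observations
    (X : ℕ → Ω → (Fin d1 → ℝ)) (Y : ℕ → Ω → (Fin d2 → ℝ))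
    (hXmeas : ∀ i, Measurable (X i)) (hYmeas : ∀ i, Measurable (Y i))
    (fXY : (Fin d1 → ℝ) → (Fin d2 → ℝ) → ℝ)
    (hfXYmeas : Measurable (Function.uncurry fXY)) (hfXYnonneg : ∀ u v, 0 ≤ fXY u v)
    (hdens : ∀ i, Measure.map (fun ω => (X i ω, Y i ω)) P
      = (volume : Measure ((Fin d1 → ℝ) × (Fin d2 → ℝ))).withDensity
          (fun p => ENNReal.ofReal (fXY p.1 p.2)))
    (hiid : iIndepFun (fun i ω => (X i ω, Y i ω)) P)
    -- marginal and conditional densities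
    (fX : (Fin d1 → ℝ) → ℝ) (hfX : ∀ u, fX u = ∫ v, fXY u v)
    (f : (Fin d1 → ℝ) → (Fin d2 → ℝ) → ℝ) (hf : ∀ u y, f u y = fXY u y / fX u)
    -- the fixed point; `f_X` positive and continuous on a neighborhood of `x`
    (x : Fin d1 → ℝ)
    (hfXcont : ∃ U : Set (Fin d1 → ℝ), IsOpen U ∧ x ∈ U ∧ ContinuousOn fX U ∧
      ∀ t ∈ U, 0 < fX t)
    -- (H1): `‖f‖_∞ < ∞` on the neighborhood `V(x)`
    (A : ℝ) (hA : 0 < A)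
    (Fsup : ℝ) (hFsup : IsLUB {r | ∃ t, (∀ i, |t i - x i| ≤ 2 * A) ∧ ∃ y, r = f t y} Fsup)
    -- the kernel `K(u,v) = K⁽¹⁾(u)K⁽²⁾(v)`, with `K⁽¹⁾` supported in `[-A,A]^{d1}`
    (K : (Fin d1 → ℝ) → (Fin d2 → ℝ) → ℝ) (K1 : (Fin d1 → ℝ) → ℝ) (K2 : (Fin d2 → ℝ) → ℝ)
    (hKfact : ∀ u v, K u v = K1 u * K2 v)
    (hKmeas : Measurable (Function.uncurry K))
    (hKbdd : ∃ Mb : ℝ, ∀ u v, |K u v| ≤ Mb)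
    (hKint : Integrable (fun p : (Fin d1 → ℝ) × (Fin d2 → ℝ) => K p.1 p.2))
    (hKL2 : Integrable (fun p : (Fin d1 → ℝ) × (Fin d2 → ℝ) => (K p.1 p.2) ^ 2))
    (hKtotal : (∫ u, ∫ v, K u v) = 1)
    (hK1supp : ∀ u, (∃ i, A < |u i|) → K1 u = 0)
    -- `‖K‖₁` and `‖K‖₂²`
    (nK1 : ℝ) (hnK1 : nK1 = ∫ u, ∫ v, |K u v|)
    (nK2sq : ℝ) (hnK2sq : nK2sq = ∫ u, ∫ v, (K u v) ^ 2)
    -- a sequence of bandwidths with `max_i h_i⁽ⁿ⁾ → 0`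
    (hseq : ℕ → (Fin d1 → ℝ) × (Fin d2 → ℝ))
    (hhpos : ∀ n, (∀ i, 0 < (hseq n).1 i) ∧ (∀ j, 0 < (hseq n).2 j))
    (hhto0 : (∀ i, Tendsto (fun n => (hseq n).1 i) atTop (nhds 0)) ∧
             (∀ j, Tendsto (fun n => (hseq n).2 j) atTop (nhds 0)))
    -- the dilated kernel, the estimators, and the convolutions `K_{h⁽ⁿ⁾} * f`
    (Kh : ((Fin d1 → ℝ) × (Fin d2 → ℝ)) → (Fin d1 → ℝ) → (Fin d2 → ℝ) → ℝ)
    (hKh : ∀ h' u v, Kh h' u v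
      = ((∏ i, h'.1 i) * (∏ j, h'.2 j))⁻¹ * K (fun i => u i / h'.1 i) (fun j => v j / h'.2 j))
    (fhat : ℕ → Ω → (Fin d2 → ℝ) → ℝ)
    (hfhat : ∀ n ω y, fhat n ω y
      = (n : ℝ)⁻¹ * ∑ i ∈ Finset.range n,
          Kh (hseq n) (x - X i ω) (y - Y i ω) / fX (X i ω))
    (Khf : ℕ → (Fin d1 → ℝ) → (Fin d2 → ℝ) → ℝ)
    (hKhf : ∀ n t y, Khf n t y = ∫ u, ∫ v, Kh (hseq n) (t - u) (y - v) * f u v) :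
    -- conclusion
    ∀ ε : ℝ, 0 < ε → ∃ (N : ℕ) (C : ℝ), 0 < C ∧ ∀ n, N ≤ n →
      (∫ y, (Khf n x y - f x y) ^ 2)
        + (1 - ε) * nK2sq / (fX x * n * ((∏ i, (hseq n).1 i) * (∏ j, (hseq n).2 j)))
        - C / n
      ≤ ∫ ω, (∫ y, (fhat n ω y - f x y) ^ 2) ∂P := by
  intro ε hε
  obtain ⟨U, hUo, hxU, hUc, hUpos⟩ := hfXcont
  have hx0 : 0 < fX x := hUpos x hxU
  have hfub : ∀ t, (∀ i, |t i - x i| ≤ 2 * A) → ∀ y, f t y ≤ Fsup := fun t ht y =>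
    hFsup.1 ⟨t, ht, y, rfl⟩
  have hfx : ∀ y, f x y ≤ Fsup := hfub x (fun i => by simp; positivity)
  have hfx0 : ∀ y, 0 ≤ f x y := fun y => by
    rw [hf]; exact div_nonneg (hfXYnonneg _ _) hx0.le
  have hFs : 0 ≤ Fsup := (hfx0 0).trans (hfx 0)
  have ha0 : 0 ≤ nK1 := by
    rw [hnK1]; exact integral_nonneg fun u => integral_nonneg fun v => abs_nonneg _
  have hb0 : 0 ≤ nK2sq := by
    rw [hnK2sq]; exact integral_nonneg fun u => integral_nonneg fun v => sq_nonneg _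
  obtain ⟨Mb, hMb⟩ := hKbdd
  have hMb0 : 0 ≤ Mb := (abs_nonneg _).trans (hMb 0 0)
  -- the target section is square integrable
  have hφ : MemLp (f x) 2 := by
    have hint : Integrable (fXY x) := by
      by_contra hc
      rw [hfX, integral_undef hc] at hx0
      exact lt_irrefl _ hx0
    have hfi : Integrable (f x) := by
      have : f x = fun y => fXY x y / fX x := funext (hf x)
      rw [this]; exact hint.div_const _
    rw [memLp_two_iff_integrable_sq hfi.aestronglyMeasurable]
    refine (hfi.const_mul Fsup).mono' (hfi.aestronglyMeasurable.pow 2) (ae_of_all _ fun y => ?_)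
    rw [Real.norm_of_nonneg (sq_nonneg _), pow_two]
    exact mul_le_mul_of_nonneg_right (hfx y) (hfx0 y)
  -- neighbourhood
  have hcx : ContinuousAt fX x := hUc.continuousAt (hUo.mem_nhds hxU)
  have hev : ∀ᶠ u in nhds x, fX x / 2 ≤ fX u ∧ (1 - ε) / fX x ≤ (fX u)⁻¹ := by
    have h1 : ∀ᶠ u in nhds x, fX x / 2 < fX u := hcx.eventually (lt_mem_nhds (by linarith))
    have h2 : ∀ᶠ u in nhds x, (1 - ε) / fX x < (fX u)⁻¹ := by
      refine (hcx.inv₀ hx0.ne').eventually (lt_mem_nhds ?_)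
      rw [div_eq_mul_inv]
      have : 0 < (fX x)⁻¹ := by positivity
      simp only [Pi.inv_apply]
      nlinarith
    filter_upwards [h1, h2] with u a b using ⟨a.le, b.le⟩
  obtain ⟨δ, hδ, hball⟩ := Metric.eventually_nhds_iff.1 hev
  have hsmall : ∀ᶠ n in atTop, ∀ i, (hseq n).1 i < min (δ / (2 * A)) 2 := by
    rw [eventually_all]
    intro i
    exact (hhto0.1 i).eventually (gt_mem_nhds (by positivity))
  obtain ⟨N, hN⟩ := eventually_atTop.1 hsmall
  refine ⟨max N 1, Fsup * nK1 * nK1 + 1, by positivity, fun n hn => ?_⟩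
  have hnN := hN n (le_of_max_le_left hn)
  have hn1 : 0 < n := le_of_max_le_right hn
  obtain ⟨hp1, hp2⟩ := hhpos n
  set π : ℝ := (∏ i, (hseq n).1 i) * (∏ j, (hseq n).2 j) with hπ
  have hπ0 : 0 < π := mul_pos (Finset.prod_pos fun i _ => hp1 i) (Finset.prod_pos fun i _ => hp2 i)
  have hπi : 0 < π⁻¹ := by positivity
  have hm := core P d1 d2 X Y hXmeas hYmeas fXY hfXYmeas hfXYnonneg hdens hiid fX hfX x (f x) hφ
    (Kh (hseq n)) (by
      have : Function.uncurry (Kh (hseq n)) = fun p : (Fin d1 → ℝ) × (Fin d2 → ℝ) => π⁻¹ *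
          (Function.uncurry K) ((fun i => p.1 i / (hseq n).1 i), fun j => p.2 j / (hseq n).2 j) := by
        ext p; simp only [Function.uncurry, hKh, hπ]
      rw [this]
      refine (hKmeas.comp ?_).const_mul _
      fun_prop)
    (π⁻¹ * Mb) (fun u v => by
      rw [hKh, abs_mul, abs_of_pos hπi]; gcongr; exact hMb _ _)
    nK1 (π⁻¹ * nK2sq) ha0 (by positivity)
    (by
      have e : ∀ u v, ENNReal.ofReal |Kh (hseq n) u v| = ENNReal.ofReal π⁻¹ *
          ENNReal.ofReal |K (fun i => u i / (hseq n).1 i) (fun j => v j / (hseq n).2 j)| :=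
        fun u v => by rw [hKh, abs_mul, abs_of_pos hπi, ENNReal.ofReal_mul hπi.le]
      simp_rw [e, lintegral_const_mul' _ _ ENNReal.ofReal_ne_top]
      rw [lint_dil _ _ hp1 hp2 (fun u v => ENNReal.ofReal |K u v|) (hKmeas.abs.ennreal_ofReal),
        ofReal_iter (fun u v => |K u v|) hKint.abs (fun _ _ => abs_nonneg _), ← hnK1, ← hπ,
        ← mul_assoc, ← ENNReal.ofReal_mul hπi.le, inv_mul_cancel₀ hπ0.ne']
      simp)
    (by
      have e : ∀ u v, ENNReal.ofReal (Kh (hseq n) u v ^ 2) = ENNReal.ofReal (π⁻¹ ^ 2) *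
          ENNReal.ofReal (K (fun i => u i / (hseq n).1 i) (fun j => v j / (hseq n).2 j) ^ 2) :=
        fun u v => by rw [hKh, mul_pow, ENNReal.ofReal_mul (sq_nonneg _)]
      simp_rw [e, lintegral_const_mul' _ _ ENNReal.ofReal_ne_top]
      rw [lint_dil _ _ hp1 hp2 (fun u v => ENNReal.ofReal (K u v ^ 2))
          ((hKmeas.pow_const 2).ennreal_ofReal),
        ofReal_iter (fun u v => K u v ^ 2) hKL2 (fun _ _ => sq_nonneg _), ← hnK2sq, ← hπ,
        ← ENNReal.ofReal_mul hπ0.le, ← ENNReal.ofReal_mul (sq_nonneg _)]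
      congr 1
      field_simp)
    (fX x / 2) ((1 - ε) / fX x) Fsup (by positivity) hFs
    (by
      intro u
      by_cases h : ∃ i, A < |(x - u) i / (hseq n).1 i|
      · left
        intro v
        rw [hKh, hKfact, hK1supp _ h]
        simp
      · right
        push Not at h
        have hb : ∀ i, |u i - x i| ≤ A * (hseq n).1 i := fun i => by
          have := h i
          rw [abs_div, abs_of_pos (hp1 i), div_le_iff₀ (hp1 i), Pi.sub_apply, abs_sub_comm] at this
          exact this
        have hd : dist u x < δ := by
          refine (dist_pi_lt_iff hδ).2 fun i => ?_
          rw [Real.dist_eq]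
          refine (hb i).trans_lt ?_
          have h1 := (hnN i).trans_le (min_le_left _ _)
          calc A * (hseq n).1 i < A * (δ / (2 * A)) := by gcongr
            _ = δ / 2 := by field_simp
            _ < δ := by linarith
        have h2A : ∀ i, |u i - x i| ≤ 2 * A := fun i => by
          have h1 := (hnN i).trans_le (min_le_right _ _)
          have := hb i
          nlinarith
        refine ⟨(hball hd).1, (hball hd).2, fun v => ?_⟩
        rw [← hf]; exact hfub u h2A v)
    n hn1
  simp_rw [hfhat, hKhf]
  simp_rw [hf] at hm ⊢
  refine le_trans ?_ hm
  have hn0 : (0 : ℝ) < n := by exact_mod_cast hn1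
  have e1 : (1 - ε) * nK2sq / (fX x * n * π) = (n : ℝ)⁻¹ * ((1 - ε) / fX x * (π⁻¹ * nK2sq)) := by
    field_simp
  have e2 : (Fsup * nK1 * nK1 + 1) / n = (n : ℝ)⁻¹ * (Fsup * nK1 * nK1) + (n : ℝ)⁻¹ := by
    field_simp
  have e3 : 0 < (n : ℝ)⁻¹ := by positivity
  rw [e1, e2, mul_sub]
  linarith
end

section
/- (Talagrand inequality, Birgé–Massart form.) Let U₁,…,U_n be i.i.d. random variables with values in a measurable space, let 𝒜 be a countable set of measurable real-valued functions τ_a, and set ν_n(a) = n^{−1} Σ_{i=1}^n [τ_a(U_i) − E(τ_a(U_i))]. Suppose sup_{a∈𝒜} sup_u |τ_a(u)| ≤ M, E[sup_{a∈𝒜} |ν_n(a)|] ≤ H, and sup_{a∈𝒜} Var(τ_a(U₁)) ≤ v. Then for any ζ > 0, P( sup_{a∈𝒜} |ν_n(a)| ≥ (1+2ζ)H ) ≤ 2 max( exp( −(ζ²/6)·nH²/v ), exp( −(min(ζ,1)ζ/21)·nH/M ) ). -/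
open MeasureTheory ProbabilityTheory

namespace Tal

/-- bounded measurable functions -/
def BM {X : Type*} [MeasurableSpace X] (g : X → ℝ) : Prop :=
  Measurable g ∧ ∃ C, ∀ x, |g x| ≤ C

/-- measurable functions bounded and bounded away from zero -/
def PB {X : Type*} [MeasurableSpace X] (g : X → ℝ) : Prop :=
  Measurable g ∧ ∃ c C, 0 < c ∧ ∀ x, c ≤ g x ∧ g x ≤ C

set_option linter.unusedSectionVars false

section basics
variable {X : Type*} [MeasurableSpace X] {f g : X → ℝ}

lemma BM.int (hg : BM g) (ρ : Measure X) [IsFiniteMeasure ρ] : Integrable g ρ := by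
  obtain ⟨hm, C, hC⟩ := hg
  exact Integrable.of_bound hm.aestronglyMeasurable C (Filter.Eventually.of_forall hC)

lemma BM.add (hf : BM f) (hg : BM g) : BM (fun x => f x + g x) := by
  obtain ⟨hm, C, hC⟩ := hf
  obtain ⟨hm', C', hC'⟩ := hg
  exact ⟨hm.add hm', C + C', fun x => (abs_add_le _ _).trans (add_le_add (hC x) (hC' x))⟩

lemma BM.neg (hf : BM f) : BM (fun x => - f x) := by
  obtain ⟨hm, C, hC⟩ := hf
  exact ⟨hm.neg, C, fun x => by simpa using hC x⟩

lemma BM.sub (hf : BM f) (hg : BM g) : BM (fun x => f x - g x) := by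
  simpa [sub_eq_add_neg] using hf.add hg.neg

lemma BM.const (c : ℝ) : BM (fun _ : X => c) := ⟨measurable_const, |c|, fun _ => le_rfl⟩

lemma BM.mul (hf : BM f) (hg : BM g) : BM (fun x => f x * g x) := by
  obtain ⟨hm, C, hC⟩ := hf
  obtain ⟨hm', C', hC'⟩ := hg
  refine ⟨hm.mul hm', C * C', fun x => ?_⟩
  rw [abs_mul]
  exact mul_le_mul (hC x) (hC' x) (abs_nonneg _) ((abs_nonneg _).trans (hC x))

lemma BM.cmul (c : ℝ) (hf : BM f) : BM (fun x => c * f x) := (BM.const c).mul hf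

lemma BM.sq (hf : BM f) : BM (fun x => f x ^ 2) := by
  simpa [_root_.sq] using hf.mul hf

lemma BM.comp {Y : Type*} [MeasurableSpace Y] {φ : Y → X} (hf : BM f) (hφ : Measurable φ) :
    BM (fun y => f (φ y)) := ⟨hf.1.comp hφ, hf.2.imp fun _ h y => h (φ y)⟩

lemma BM.exp (hf : BM f) : PB (fun x => Real.exp (f x)) := by
  obtain ⟨hm, C, hC⟩ := hf
  exact ⟨hm.exp, Real.exp (-C), Real.exp C, Real.exp_pos _, fun x =>
    ⟨Real.exp_le_exp.2 (abs_le.1 (hC x)).1, Real.exp_le_exp.2 (abs_le.1 (hC x)).2⟩⟩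

lemma PB.bm (hf : PB f) : BM f := by
  obtain ⟨hm, c, C, hc, h⟩ := hf
  exact ⟨hm, C, fun x => by rw [abs_of_pos (hc.trans_le (h x).1)]; exact (h x).2⟩

lemma PB.pos (hf : PB f) (x : X) : 0 < f x := by
  obtain ⟨hm, c, C, hc, h⟩ := hf
  exact hc.trans_le (h x).1

lemma PB.log (hf : PB f) : BM (fun x => Real.log (f x)) := by
  obtain ⟨hm, c, C, hc, h⟩ := hf
  refine ⟨hm.log, max (|Real.log c|) (|Real.log C|), fun x => ?_⟩
  have h1 := Real.log_le_log hc (h x).1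
  have h2 := Real.log_le_log (hc.trans_le (h x).1) (h x).2
  exact abs_le_max_abs_abs h1 h2

lemma PB.inv (hf : PB f) : PB (fun x => (f x)⁻¹) := by
  obtain ⟨hm, c, C, hc, h⟩ := hf
  by_cases hX : Nonempty X
  · obtain ⟨x0⟩ := hX
    have hC : 0 < C := hc.trans_le ((h x0).1.trans (h x0).2)
    refine ⟨hm.inv, C⁻¹, c⁻¹, inv_pos.2 hC, fun x => ⟨?_, ?_⟩⟩
    · exact inv_anti₀ (hc.trans_le (h x).1) (h x).2
    · exact inv_anti₀ hc (h x).1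
  · exact ⟨hm.inv, 1, 1, one_pos, fun x => (hX ⟨x⟩).elim⟩

end basics

section prod
variable {E : Type*} [MeasurableSpace E] (μ : Measure E) [IsProbabilityMeasure μ] {n : ℕ}

/-- integrating out coordinate `k` -/
noncomputable def A (k : Fin n) (g : (Fin n → E) → ℝ) (x : Fin n → E) : ℝ :=
  ∫ y, g (Function.update x k y) ∂μ

lemma meas_upd (k : Fin n) :
    Measurable (fun p : (Fin n → E) × E => Function.update p.1 k p.2) := by
  refine measurable_pi_iff.2 fun i => ?_
  by_cases h : i = k
  · subst h; simpa using measurable_snd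
  · simp only [Function.update_of_ne h]
    exact (measurable_pi_apply i).comp measurable_fst

lemma map_upd (k : Fin n) :
    Measure.map (fun p : (Fin n → E) × E => Function.update p.1 k p.2)
      ((Measure.pi (fun _ : Fin n => μ)).prod μ) = Measure.pi (fun _ : Fin n => μ) := by
  refine (Measure.pi_eq fun s hs => ?_).symm
  rw [Measure.map_apply (meas_upd k) (MeasurableSet.univ_pi hs)]
  have : (fun p : (Fin n → E) × E => Function.update p.1 k p.2) ⁻¹' (Set.univ.pi s)
      = (Set.univ.pi (Function.update s k Set.univ)) ×ˢ (s k) := by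
    ext p
    simp only [Set.mem_preimage, Set.mem_pi, Set.mem_univ, true_implies, Set.mem_prod]
    constructor
    · intro h
      refine ⟨fun i => ?_, by simpa using h k⟩
      by_cases hi : i = k
      · subst hi; simp
      · have := h i
        rw [Function.update_of_ne hi] at this ⊢
        exact this
    · rintro ⟨h, h'⟩ i
      by_cases hi : i = k
      · subst hi; simpa using h'
      · have := h i
        rw [Function.update_of_ne hi] at this ⊢
        exact this
  rw [this, Measure.prod_prod, Measure.pi_pi, ← Finset.prod_erase_mul _ _ (Finset.mem_univ k),
    ← Finset.prod_erase_mul (Finset.univ) (fun i => μ (s i)) (Finset.mem_univ k)]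
  simp only [Function.update_self, measure_univ, mul_one]
  congr 1
  refine Finset.prod_congr rfl fun i hi => ?_
  rw [Function.update_of_ne (Finset.ne_of_mem_erase hi)]

lemma A_int (k : Fin n) {g : (Fin n → E) → ℝ} (hg : BM g) :
    ∫ x, A μ k g x ∂(Measure.pi (fun _ : Fin n => μ))
      = ∫ x, g x ∂(Measure.pi (fun _ : Fin n => μ)) := by
  conv_rhs => rw [← map_upd μ k]
  rw [integral_map (meas_upd k).aemeasurable hg.1.aestronglyMeasurable,
    integral_prod _ ((hg.comp (meas_upd k)).int _)]
  rfl

lemma A_meas (k : Fin n) {g : (Fin n → E) → ℝ} (hg : BM g) : Measurable (A μ k g) :=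
  ((hg.comp (meas_upd k)).1.stronglyMeasurable.integral_prod_right).measurable

lemma upd_meas (x : Fin n → E) (k : Fin n) : Measurable (fun y => Function.update x k y) :=
  (meas_upd k).comp (measurable_const.prodMk measurable_id)

lemma A_mono (k : Fin n) {f g : (Fin n → E) → ℝ} (hf : BM f) (hg : BM g) (x : Fin n → E)
    (h : ∀ y, f (Function.update x k y) ≤ g (Function.update x k y)) : A μ k f x ≤ A μ k g x :=
  integral_mono ((hf.comp (upd_meas x k)).int _) ((hg.comp (upd_meas x k)).int _) h

lemma A_const (k : Fin n) (c : ℝ) (x : Fin n → E) : A μ k (fun _ => c) x = c := by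
  simp [A]

lemma A_pb (k : Fin n) {g : (Fin n → E) → ℝ} (hg : PB g) : PB (A μ k g) := by
  refine ⟨A_meas μ k hg.bm, ?_⟩
  have hb := hg.bm
  obtain ⟨hm, c, C, hc, h⟩ := hg
  refine ⟨c, C, hc, fun x => ⟨?_, ?_⟩⟩
  · rw [← A_const μ k c x]; exact A_mono μ k (BM.const c) hb x (fun y => (h _).1)
  · rw [← A_const μ k C x]; exact A_mono μ k hb (BM.const C) x (fun y => (h _).2)

lemma A_bm (k : Fin n) {g : (Fin n → E) → ℝ} (hg : BM g) : BM (A μ k g) := by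
  refine ⟨A_meas μ k hg, ?_⟩
  have hb := hg
  obtain ⟨hm, C, h⟩ := hg
  refine ⟨C, fun x => abs_le.2 ⟨?_, ?_⟩⟩
  · rw [← A_const μ k (-C) x]; exact A_mono μ k (BM.const _) hb x (fun y => (abs_le.1 (h _)).1)
  · rw [← A_const μ k C x]; exact A_mono μ k hb (BM.const C) x (fun y => (abs_le.1 (h _)).2)

/-- `g` does not depend on coordinate `k` -/
def Ind (k : Fin n) (g : (Fin n → E) → ℝ) : Prop := ∀ x y, g (Function.update x k y) = g x

lemma A_ind (k : Fin n) (g : (Fin n → E) → ℝ) : Ind k (A μ k g) := by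
  intro x y; simp [A]

lemma A_ind' (k j : Fin n) (g : (Fin n → E) → ℝ) (h : Ind j g) : Ind j (A μ k g) := by
  by_cases hjk : j = k
  · subst hjk; exact A_ind μ j g
  · intro x y
    unfold A
    congr 1; ext z
    rw [Function.update_comm hjk, h]

lemma A_mul (k : Fin n) (u g : (Fin n → E) → ℝ) (h : Ind k u) (x : Fin n → E) :
    A μ k (fun x => u x * g x) x = u x * A μ k g x := by
  unfold A
  rw [← integral_const_mul]
  congr 1; ext z
  show u _ * g _ = _
  rw [h]

lemma int_mul_A (k : Fin n) (u g : (Fin n → E) → ℝ) (h : Ind k u) (hu : BM u) (hg : BM g) :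
    ∫ x, u x * g x ∂(Measure.pi (fun _ : Fin n => μ))
      = ∫ x, u x * A μ k g x ∂(Measure.pi (fun _ : Fin n => μ)) := by
  rw [← A_int μ k (hu.mul hg)]
  congr 1; ext x; exact A_mul μ k u g h x

lemma const_of_ind (g : (Fin n → E) → ℝ) (h : ∀ k, Ind k g) (x y : Fin n → E) : g x = g y := by
  have : ∀ s : Finset (Fin n), g (s.piecewise x y) = g y := by
    intro s
    induction s using Finset.induction with
    | empty => simp
    | insert j s _ ih => rw [Finset.piecewise_insert, h j, ih]
  simpa using this Finset.univ

/-- iterated averages -/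
noncomputable def G (g : (Fin n → E) → ℝ) : List (Fin n) → (Fin n → E) → ℝ
  | [] => g
  | k :: l => A μ k (G g l)

lemma G_pb (g : (Fin n → E) → ℝ) (hg : PB g) (l : List (Fin n)) : PB (G μ g l) := by
  induction l with
  | nil => exact hg
  | cons k l ih => exact A_pb μ k ih

lemma G_ind (g : (Fin n → E) → ℝ) (l : List (Fin n)) (k : Fin n) (hk : k ∈ l) :
    Ind k (G μ g l) := by
  induction l with
  | nil => simp at hk
  | cons j l ih =>
    by_cases h : k = j
    · subst h; exact A_ind μ k _
    · exact A_ind' μ j k _ (ih (by simpa [h] using hk))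

lemma G_int (g : (Fin n → E) → ℝ) (hg : PB g) (l : List (Fin n)) :
    ∫ x, G μ g l x ∂(Measure.pi (fun _ : Fin n => μ))
      = ∫ x, g x ∂(Measure.pi (fun _ : Fin n => μ)) := by
  induction l with
  | nil => rfl
  | cons j l ih => rw [← ih]; exact A_int μ j (G_pb μ g hg l).bm

lemma young (a b y : ℝ) : Real.exp a * y ≤
    Real.exp a * (a - b) - Real.exp a + Real.exp b * Real.exp y := by
  have h := Real.add_one_le_exp (y + b - a)
  have h2 : Real.exp b * Real.exp y = Real.exp a * Real.exp (y + b - a) := by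
    rw [← Real.exp_add, ← Real.exp_add]; congr 1; ring
  rw [h2]
  nlinarith [Real.exp_pos a]

/-- subadditivity of entropy, along a list of coordinates. -/
lemma ent_list (Z : (Fin n → E) → ℝ) (hZ : BM Z) (W : Fin n → (Fin n → E) → ℝ)
    (hW : ∀ k, BM (W k)) (hI : ∀ k, Ind k (W k)) (l : List (Fin n)) :
    ∫ x, Real.exp (Z x) * (Z x - Real.log (G μ (fun x => Real.exp (Z x)) l x))
      ∂(Measure.pi (fun _ : Fin n => μ)) ≤
    (l.map (fun k => ∫ x, (Real.exp (Z x) * (Z x - W k x) - Real.exp (Z x) + Real.exp (W k x))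
      ∂(Measure.pi (fun _ : Fin n => μ)))).sum := by
  induction l with
  | nil => simp [G]
  | cons k l ih =>
    set g : (Fin n → E) → ℝ := fun x => Real.exp (Z x) with hg
    have hgp : PB g := hZ.exp
    have hl := G_pb μ g hgp l
    have hkl := G_pb μ g hgp (k :: l)
    rw [List.map_cons, List.sum_cons]
    set π := Measure.pi (fun _ : Fin n => μ) with hπ
    have e1 : ∫ x, Real.exp (Z x) * (Z x - Real.log (G μ g (k :: l) x)) ∂π
        = ∫ x, Real.exp (Z x) * (Real.log (G μ g l x) - Real.log (G μ g (k :: l) x)) ∂π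
          + ∫ x, Real.exp (Z x) * (Z x - Real.log (G μ g l x)) ∂π := by
      rw [← integral_add ((hgp.bm.mul (hl.log.sub hkl.log)).int _)
        ((hgp.bm.mul (hZ.sub hl.log)).int _)]
      congr 1; ext x; ring
    rw [e1]
    refine add_le_add ?_ ih
    have hw : BM (fun x => (G μ g (k :: l) x)⁻¹ * G μ g l x) := hkl.inv.bm.mul hl.bm
    have e2 : ∫ x, Real.exp (W k x) * ((G μ g (k :: l) x)⁻¹ * G μ g l x) ∂π
        = ∫ x, Real.exp (W k x) ∂π := by
      have hu : BM (fun x => Real.exp (W k x) * (G μ g (k :: l) x)⁻¹) :=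
        (hW k).exp.bm.mul hkl.inv.bm
      have hi : Ind k (fun x => Real.exp (W k x) * (G μ g (k :: l) x)⁻¹) := by
        intro x y
        show Real.exp (W k _) * (G μ g (k :: l) _)⁻¹ = _
        rw [hI k, G_ind μ g (k :: l) k (by simp)]
      have := int_mul_A μ k _ _ hi hu hl.bm
      simp only [mul_assoc] at this
      rw [this]
      congr 1; ext x
      have hp := (hkl.pos x).ne'
      show Real.exp (W k x) * ((G μ g (k :: l) x)⁻¹ * G μ g (k :: l) x) = _
      rw [inv_mul_cancel₀ hp, mul_one]
    have b1 : BM (fun x => Real.exp (Z x) * (Z x - W k x) - Real.exp (Z x)) :=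
      (hgp.bm.mul (hZ.sub (hW k))).sub hgp.bm
    rw [integral_add (b1.int _) ((hW k).exp.bm.int _), ← e2,
      ← integral_add (b1.int _) (((hW k).exp.bm.mul hw).int _)]
    refine integral_mono ((hgp.bm.mul (hl.log.sub hkl.log)).int _)
      ((b1.add ((hW k).exp.bm.mul hw)).int _) fun x => ?_
    have := young (Z x) (W k x) (Real.log (G μ g l x) - Real.log (G μ g (k :: l) x))
    rwa [Real.exp_sub, Real.exp_log (hl.pos x), Real.exp_log (hkl.pos x), div_eq_inv_mul] at this

lemma ent_sum (Z : (Fin n → E) → ℝ) (hZ : BM Z) (W : Fin n → (Fin n → E) → ℝ)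
    (hW : ∀ k, BM (W k)) (hI : ∀ k, Ind k (W k)) :
    ∫ x, Real.exp (Z x) * (Z x - Real.log (∫ x, Real.exp (Z x) ∂(Measure.pi (fun _ : Fin n => μ))))
      ∂(Measure.pi (fun _ : Fin n => μ)) ≤
    ∑ k, ∫ x, (Real.exp (Z x) * (Z x - W k x) - Real.exp (Z x) + Real.exp (W k x))
      ∂(Measure.pi (fun _ : Fin n => μ)) := by
  have h := ent_list μ Z hZ W hW hI (List.finRange n)
  have hc : ∀ x, G μ (fun x => Real.exp (Z x)) (List.finRange n) x
      = ∫ x, Real.exp (Z x) ∂(Measure.pi (fun _ : Fin n => μ)) := by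
    intro x
    rw [← G_int μ _ hZ.exp (List.finRange n)]
    have : ∀ y, G μ (fun x => Real.exp (Z x)) (List.finRange n) y
        = G μ (fun x => Real.exp (Z x)) (List.finRange n) x := fun y =>
      const_of_ind _ (fun k => G_ind μ _ _ k (List.mem_finRange k)) y x
    simp only [this]
    simp
  simp only [hc] at h
  refine h.trans (le_of_eq ?_)
  rw [← List.ofFn_eq_map, List.sum_ofFn]

lemma hbound (a b : ℝ) (h : a - b ≤ 1) :
    Real.exp a * (a - b) - Real.exp a + Real.exp b ≤ Real.exp b * (a - b) ^ 2 := by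
  have h1 := Real.add_one_le_exp (a - b)
  have h2 : Real.exp a = Real.exp b * Real.exp (a - b) := by
    rw [← Real.exp_add]; congr 1; ring
  rw [h2]
  have hb := Real.exp_pos b
  have : 0 ≤ (1 - (a - b)) * (Real.exp (a - b) - (a - b + 1)) :=
    mul_nonneg (by linarith) (by linarith)
  nlinarith [mul_nonneg hb.le this]

lemma key (Z : (Fin n → E) → ℝ) (hZ : BM Z) (W : Fin n → (Fin n → E) → ℝ)
    (hW : ∀ k, BM (W k)) (hI : ∀ k, Ind k (W k)) (s : ℝ) (hs : 0 ≤ s)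
    (h1 : ∀ k x, Z x - W k x ≤ 1) (hsum : ∀ x, ∑ k, (Z x - W k x) ≤ Z x)
    (hA0 : ∀ k x, 0 ≤ A μ k (fun x => Z x - W k x) x)
    (hA2 : ∀ k x, A μ k (fun x => (Z x - W k x) ^ 2) x ≤ s + 2 * A μ k (fun x => Z x - W k x) x)
    (t : ℝ) (ht0 : 0 ≤ t) (ht1 : t ≤ 1) :
    ∫ x, Real.exp (t * Z x) * (t * Z x -
        Real.log (∫ x, Real.exp (t * Z x) ∂(Measure.pi (fun _ : Fin n => μ))))
      ∂(Measure.pi (fun _ : Fin n => μ)) ≤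
    t ^ 2 * (n * s * ∫ x, Real.exp (t * Z x) ∂(Measure.pi (fun _ : Fin n => μ))
      + 2 * ∫ x, Z x * Real.exp (t * Z x) ∂(Measure.pi (fun _ : Fin n => μ))) := by
  set π := Measure.pi (fun _ : Fin n => μ) with hπ
  have hD : ∀ k, BM (fun x => Z x - W k x) := fun k => hZ.sub (hW k)
  have eZ : BM (fun x => Real.exp (t * Z x)) := (hZ.cmul t).exp.bm
  have eW : ∀ k, BM (fun x => Real.exp (t * W k x)) := fun k => ((hW k).cmul t).exp.bm
  have eI : ∀ k, Ind k (fun x => Real.exp (t * W k x)) := fun k x y => by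
    show Real.exp (t * W k _) = _
    rw [hI k]
  have hk : ∀ k, ∫ x, (Real.exp (t * Z x) * (t * Z x - t * W k x) - Real.exp (t * Z x)
      + Real.exp (t * W k x)) ∂π ≤ t ^ 2 * (s * ∫ x, Real.exp (t * Z x) ∂π
        + 2 * ∫ x, (Z x - W k x) * Real.exp (t * Z x) ∂π) := by
    intro k
    have c1 : ∫ x, Real.exp (t * W k x) * (Z x - W k x) ∂π
        = ∫ x, Real.exp (t * W k x) * A μ k (fun x => Z x - W k x) x ∂π :=
      int_mul_A μ k _ _ (eI k) (eW k) (hD k)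
    have c2 : ∫ x, Real.exp (t * W k x) * (Z x - W k x) ^ 2 ∂π
        = ∫ x, Real.exp (t * W k x) * A μ k (fun x => (Z x - W k x) ^ 2) x ∂π :=
      int_mul_A μ k _ _ (eI k) (eW k) (hD k).sq
    have c0 : 0 ≤ ∫ x, Real.exp (t * W k x) * (Z x - W k x) ∂π := by
      rw [c1]
      exact integral_nonneg fun x => mul_nonneg (Real.exp_pos _).le (hA0 k x)
    have c3 : ∫ x, Real.exp (t * W k x) ∂π ≤ ∫ x, Real.exp (t * Z x) ∂π := by
      have : ∫ x, (Real.exp (t * W k x) + t * (Real.exp (t * W k x) * (Z x - W k x))) ∂π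
          ≤ ∫ x, Real.exp (t * Z x) ∂π := by
        refine integral_mono (((eW k).add (((eW k).mul (hD k)).cmul t)).int _) (eZ.int _)
          fun x => ?_
        have q1 := Real.add_one_le_exp (t * Z x - t * W k x)
        have q2 : Real.exp (t * Z x) = Real.exp (t * W k x) * Real.exp (t * Z x - t * W k x) := by
          rw [← Real.exp_add]; congr 1; ring
        show Real.exp (t * W k x) + t * (Real.exp (t * W k x) * (Z x - W k x))
          ≤ Real.exp (t * Z x)
        rw [q2]
        nlinarith [Real.exp_pos (t * W k x)]
      rw [integral_add ((eW k).int _) ((((eW k).mul (hD k)).cmul t).int _),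
        integral_const_mul] at this
      nlinarith [mul_nonneg ht0 c0]
    have c4 : ∫ x, Real.exp (t * W k x) * (Z x - W k x) ∂π
        ≤ ∫ x, (Z x - W k x) * Real.exp (t * Z x) ∂π := by
      refine integral_mono (((eW k).mul (hD k)).int _) (((hD k).mul eZ).int _) fun x => ?_
      show Real.exp (t * W k x) * (Z x - W k x) ≤ (Z x - W k x) * Real.exp (t * Z x)
      rw [mul_comm]
      rcases le_total (W k x) (Z x) with h | h
      · exact mul_le_mul_of_nonneg_left
          (Real.exp_le_exp.2 (mul_le_mul_of_nonneg_left h ht0)) (by linarith)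
      · exact mul_le_mul_of_nonpos_left
          (Real.exp_le_exp.2 (mul_le_mul_of_nonneg_left h ht0)) (by linarith)
    have c5 : ∫ x, (Real.exp (t * Z x) * (t * Z x - t * W k x) - Real.exp (t * Z x)
      + Real.exp (t * W k x)) ∂π ≤ t ^ 2 * ∫ x, Real.exp (t * W k x) * (Z x - W k x) ^ 2 ∂π := by
      rw [← integral_const_mul]
      refine integral_mono ((((eZ.mul ((hZ.cmul t).sub ((hW k).cmul t))).sub eZ).add (eW k)).int _)
        ((((eW k).mul (hD k).sq).cmul (t ^ 2)).int _) fun x => ?_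
      have := hbound (t * Z x) (t * W k x) (by nlinarith [h1 k x])
      refine this.trans (le_of_eq ?_)
      show _ = t ^ 2 * (Real.exp (t * W k x) * (Z x - W k x) ^ 2)
      ring
    have c6 : ∫ x, Real.exp (t * W k x) * (Z x - W k x) ^ 2 ∂π
        ≤ s * ∫ x, Real.exp (t * W k x) ∂π
          + 2 * ∫ x, Real.exp (t * W k x) * (Z x - W k x) ∂π := by
      rw [c1, c2, ← integral_const_mul, ← integral_const_mul,
        ← integral_add (((eW k).cmul s).int _)
          ((((eW k).mul (A_bm μ k (hD k))).cmul 2).int _)]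
      refine integral_mono (((eW k).mul (A_bm μ k (hD k).sq)).int _)
        ((((eW k).cmul s).add (((eW k).mul (A_bm μ k (hD k))).cmul 2)).int _) fun x => ?_
      have := mul_le_mul_of_nonneg_left (hA2 k x) (Real.exp_pos (t * W k x)).le
      refine this.trans (le_of_eq ?_)
      ring
    refine c5.trans (mul_le_mul_of_nonneg_left ?_ (sq_nonneg t))
    have := mul_le_mul_of_nonneg_left c3 hs
    linarith
  have h := ent_sum μ (fun x => t * Z x) (hZ.cmul t) (fun k x => t * W k x)
    (fun k => (hW k).cmul t) (fun k x y => by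
      show t * W k _ = _
      rw [hI k])
  refine h.trans ((Finset.sum_le_sum fun k _ => hk k).trans ?_)
  rw [← Finset.mul_sum, Finset.sum_add_distrib, ← Finset.mul_sum _ _ (2 : ℝ),
    ← integral_finsetSum _ (fun k _ => ((hD k).mul eZ).int _)]
  refine mul_le_mul_of_nonneg_left ?_ (sq_nonneg t)
  have hfin : ∫ x, ∑ k, (Z x - W k x) * Real.exp (t * Z x) ∂π
      ≤ ∫ x, Z x * Real.exp (t * Z x) ∂π := by
    refine integral_mono (integrable_finsetSum _ (fun k _ => ((hD k).mul eZ).int _))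
      ((hZ.mul eZ).int _) fun x => ?_
    show ∑ k, (Z x - W k x) * Real.exp (t * Z x) ≤ Z x * Real.exp (t * Z x)
    rw [← Finset.sum_mul]
    exact mul_le_mul_of_nonneg_right (hsum x) (Real.exp_pos _).le
  have : ∑ k : Fin n, s * ∫ x, Real.exp (t * Z x) ∂π = n * s * ∫ x, Real.exp (t * Z x) ∂π := by
    simp [mul_assoc]
  rw [this]
  linarith

end prod
section tail
variable {X : Type*} [MeasurableSpace X] (ρ : Measure X) [IsProbabilityMeasure ρ]

lemma tail (Z : X → ℝ) (hZ : BM Z) (S m : ℝ) (hS : 0 ≤ S) (hm : 0 < m)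
    (hZm : ∫ x, Z x ∂ρ ≤ m)
    (hent : ∀ t : ℝ, 0 ≤ t → t ≤ 1 →
      ∫ x, Real.exp (t * Z x) * (t * Z x - Real.log (∫ x, Real.exp (t * Z x) ∂ρ)) ∂ρ
      ≤ t ^ 2 * (S * ∫ x, Real.exp (t * Z x) ∂ρ + 2 * ∫ x, Z x * Real.exp (t * Z x) ∂ρ))
    (r : ℝ) (hr : 0 < r) :
    ρ.real {x | m + r ≤ Z x} ≤ Real.exp (-(r ^ 2 / (4 * (S + 2 * m + r)))) := by
  have eZ : ∀ t : ℝ, BM (fun x => Real.exp (t * Z x)) := fun t => (hZ.cmul t).exp.bm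
  have hset : integrableExpSet Z ρ = Set.univ := by
    ext t; simpa [integrableExpSet] using (eZ t).int ρ
  have hmem : ∀ t : ℝ, t ∈ interior (integrableExpSet Z ρ) := fun t => by simp [hset]
  have hder : ∀ t, HasDerivAt (cgf Z ρ) (deriv (cgf Z ρ) t) t := fun t =>
    (analyticAt_cgf (hmem t)).differentiableAt.hasDerivAt
  have hpos : ∀ t, 0 < mgf Z ρ t := fun t => mgf_pos ((eZ t).int ρ)
  have hineq : ∀ t : ℝ, 0 ≤ t → t ≤ 1 → t * deriv (cgf Z ρ) t - cgf Z ρ t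
      ≤ t ^ 2 * (S + 2 * deriv (cgf Z ρ) t) := by
    intro t h0 h1
    have h := hent t h0 h1
    have e : ∫ x, Real.exp (t * Z x) * (t * Z x - Real.log (∫ x, Real.exp (t * Z x) ∂ρ)) ∂ρ
        = t * (∫ x, Z x * Real.exp (t * Z x) ∂ρ)
          - cgf Z ρ t * mgf Z ρ t := by
      unfold cgf mgf
      rw [← integral_const_mul, ← integral_const_mul, ← integral_sub
        (((hZ.mul (eZ t)).cmul t).int ρ) (((eZ t).cmul _).int ρ)]
      congr 1; ext x; ring
    rw [e] at h
    have hF := hpos t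
    have e2 : ∫ x, Z x * Real.exp (t * Z x) ∂ρ = deriv (cgf Z ρ) t * mgf Z ρ t := by
      rw [deriv_cgf (hmem t), div_mul_cancel₀ _ hF.ne']
    have e3 : ∫ x, Real.exp (t * Z x) ∂ρ = mgf Z ρ t := rfl
    rw [e2, e3] at h
    have : (t * deriv (cgf Z ρ) t - cgf Z ρ t) * mgf Z ρ t
      ≤ (t ^ 2 * (S + 2 * deriv (cgf Z ρ) t)) * mgf Z ρ t := by linarith
    exact le_of_mul_le_mul_right this hF
  have hΦd : ∀ t : ℝ, 0 < t → HasDerivAt (fun t => cgf Z ρ t / t - S * t - 2 * cgf Z ρ t)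
      ((deriv (cgf Z ρ) t * t - cgf Z ρ t * 1) / t ^ 2 - S * 1 - 2 * deriv (cgf Z ρ) t) t :=
    fun t ht => (((hder t).div (hasDerivAt_id t) ht.ne').sub
      ((hasDerivAt_id t).const_mul S)).sub ((hder t).const_mul 2)
  have hanti : AntitoneOn (fun t => cgf Z ρ t / t - S * t - 2 * cgf Z ρ t) (Set.Ioc 0 1) := by
    refine antitoneOn_of_deriv_nonpos (convex_Ioc 0 1)
      (fun t ht => (hΦd t ht.1).continuousAt.continuousWithinAt)
      (fun t ht => ?_) (fun t ht => ?_)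
    · rw [interior_Ioc] at ht
      exact (hΦd t ht.1).differentiableAt.differentiableWithinAt
    · rw [interior_Ioc] at ht
      rw [(hΦd t ht.1).deriv]
      have h := hineq t ht.1.le ht.2.le
      have h3 : (deriv (cgf Z ρ) t * t - cgf Z ρ t * 1) / t ^ 2
          ≤ S + 2 * deriv (cgf Z ρ) t := by
        rw [div_le_iff₀ (pow_pos ht.1 2)]; linarith
      linarith
  have hlim : Filter.Tendsto (fun t => cgf Z ρ t / t - S * t - 2 * cgf Z ρ t)
      (nhdsWithin 0 (Set.Ioi 0)) (nhds (∫ x, Z x ∂ρ)) := by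
    have d0 : deriv (cgf Z ρ) 0 = ∫ x, Z x ∂ρ := by
      rw [deriv_cgf_zero (hmem 0)]; simp
    have h1 := (hder 0).tendsto_slope_zero_right
    simp only [zero_add, cgf_zero, sub_zero, smul_eq_mul, d0] at h1
    have h2 : Filter.Tendsto (fun t => S * t + 2 * cgf Z ρ t)
      (nhdsWithin 0 (Set.Ioi 0)) (nhds 0) := by
      have : ContinuousAt (fun t => S * t + 2 * cgf Z ρ t) 0 :=
        (continuousAt_id.const_mul S).add ((hder 0).continuousAt.const_mul 2)
      have h := this.tendsto.mono_left (nhdsWithin_le_nhds (s := Set.Ioi (0:ℝ)))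
      simpa using h
    have h3 := h1.sub h2
    rw [sub_zero] at h3
    refine h3.congr fun t => ?_
    rw [inv_mul_eq_div]; ring
  have hL : ∀ t : ℝ, 0 < t → t ≤ 1 → cgf Z ρ t / t - S * t - 2 * cgf Z ρ t ≤ m := by
    intro t h0 h1
    refine le_trans (ge_of_tendsto hlim ?_) hZm
    filter_upwards [Ioo_mem_nhdsGT h0] with u hu
    exact hanti ⟨hu.1, hu.2.le.trans h1⟩ ⟨h0, h1⟩ hu.2.le
  set V := S + 2 * m with hV
  have hVpos : 0 < V := by positivity
  set t := r / (2 * (V + r)) with ht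
  have hVr : 0 < V + r := by positivity
  have t0 : 0 < t := by positivity
  have htr : t * (2 * (V + r)) = r := by rw [ht]; field_simp
  have t1 : t ≤ 1 := by
    rw [ht, div_le_one (by positivity)]; linarith
  have hC := measure_ge_le_exp_cgf (μ := ρ) (X := Z) (m + r) t0.le ((eZ t).int ρ)
  refine hC.trans (Real.exp_le_exp.2 ?_)
  have h := hL t t0 t1
  have h' : cgf Z ρ t * (1 - 2 * t) ≤ t * m + S * t ^ 2 := by
    have : cgf Z ρ t / t * t = cgf Z ρ t := by field_simp
    nlinarith
  have h12 : (1 - 2 * t) * (V + r) = V := by linarith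
  have h6 : cgf Z ρ t * V ≤ (t * m + S * t ^ 2) * (V + r) := by
    calc cgf Z ρ t * V = cgf Z ρ t * (1 - 2 * t) * (V + r) := by rw [mul_assoc, h12]
      _ ≤ _ := mul_le_mul_of_nonneg_right h' hVr.le
  have h7 : (t * m + S * t ^ 2) * (V + r) = t * m * V + t ^ 2 * (V + r) * V := by
    have : V + r = V + 2 * t * (V + r) := by linarith
    have h8 : t * m * (V + r) = t * m * V + t * m * (2 * t * (V + r)) := by
      rw [← mul_add, ← this]
    rw [add_mul, h8, hV]; ring
  have h9 : cgf Z ρ t ≤ t * m + t ^ 2 * (V + r) := by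
    rw [h7, ← add_mul] at h6
    exact le_of_mul_le_mul_right h6 hVpos
  have h10 : r ^ 2 / (4 * (V + r)) = t ^ 2 * (V + r) := by
    rw [ht]; field_simp; ring
  have h11 : t * r = 2 * (t ^ 2 * (V + r)) := by
    calc t * r = t * (t * (2 * (V + r))) := by rw [htr]
      _ = _ := by ring
  rw [h10]
  linarith

end tail
section emp
variable {E : Type*} [MeasurableSpace E] (μ : Measure E) [IsProbabilityMeasure μ] {n : ℕ}
variable {ι : Type*} [Countable ι] [Nonempty ι]

/-- supremum of absolute partial sums over a set of coordinates -/
noncomputable def ZS (f : ι → E → ℝ) (s : Finset (Fin n)) (x : Fin n → E) : ℝ :=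
  ⨆ a, |∑ i ∈ s, f a (x i)|

variable (f : ι → E → ℝ)

lemma abs_sum_le
    (h1 : ∀ a u, |f a u| ≤ 1) (a : ι) (s : Finset (Fin n)) (x : Fin n → E) : |∑ i ∈ s, f a (x i)| ≤ n := by
  calc |∑ i ∈ s, f a (x i)| ≤ ∑ i ∈ s, |f a (x i)| := Finset.abs_sum_le_sum_abs _ _
    _ ≤ ∑ i ∈ s, 1 := Finset.sum_le_sum fun i _ => h1 _ _
    _ ≤ n := by
      simp only [Finset.sum_const, nsmul_eq_mul, mul_one]
      exact_mod_cast (Finset.card_le_univ s).trans (by simp)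

lemma ZS_bdd
    (h1 : ∀ a u, |f a u| ≤ 1) (s : Finset (Fin n)) (x : Fin n → E) :
    BddAbove (Set.range fun a => |∑ i ∈ s, f a (x i)|) :=
  ⟨n, by rintro _ ⟨a, rfl⟩; exact abs_sum_le f h1 a s x⟩

lemma le_ZS
    (h1 : ∀ a u, |f a u| ≤ 1) (a : ι) (s : Finset (Fin n)) (x : Fin n → E) :
    |∑ i ∈ s, f a (x i)| ≤ ZS f s x := le_ciSup (ZS_bdd f h1 s x) a

lemma ZS_bm
    (hf : ∀ a, Measurable (f a)) (h1 : ∀ a u, |f a u| ≤ 1) (s : Finset (Fin n)) : BM (ZS f s : (Fin n → E) → ℝ) := by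
  refine ⟨?_, n, fun x => ?_⟩
  · unfold ZS
    refine Measurable.iSup fun a => ?_
    have : Measurable fun x : Fin n → E => ∑ i ∈ s, f a (x i) :=
      Finset.measurable_sum s fun i _ => (hf a).comp (measurable_pi_apply i)
    exact continuous_abs.measurable.comp this
  · have h0 : 0 ≤ ZS f s x := Real.iSup_nonneg fun a => abs_nonneg _
    rw [abs_of_nonneg h0]
    exact ciSup_le fun a => abs_sum_le f h1 a s x

lemma ZS_ind (k : Fin n) : Ind k (ZS f (Finset.univ.erase k) : (Fin n → E) → ℝ) := by
  intro x y
  unfold ZS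
  congr 1; ext a
  congr 1
  refine Finset.sum_congr rfl fun i hi => ?_
  rw [Function.update_of_ne (Finset.ne_of_mem_erase hi)]

lemma ZS_le_one
    (h1 : ∀ a u, |f a u| ≤ 1) (k : Fin n) (x : Fin n → E) :
    ZS f Finset.univ x - ZS f (Finset.univ.erase k) x ≤ 1 := by
  rw [sub_le_iff_le_add]
  refine ciSup_le fun a => ?_
  rw [← Finset.add_sum_erase _ _ (Finset.mem_univ k)]
  exact (abs_add_le _ _).trans (add_le_add (h1 _ _) (le_ZS f h1 a _ x))

lemma ZS_sum
    (h1 : ∀ a u, |f a u| ≤ 1) (x : Fin n → E) :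
    ∑ k, (ZS f Finset.univ x - ZS f (Finset.univ.erase k) x) ≤ ZS f Finset.univ x := by
  rcases Nat.eq_zero_or_pos n with h0 | hn
  · subst h0
    simp only [Finset.univ_eq_empty, Finset.sum_empty]
    exact Real.iSup_nonneg fun a => abs_nonneg _
  have hn' : (0:ℝ) ≤ n - 1 := by
    have : (1:ℝ) ≤ n := by exact_mod_cast hn
    linarith
  have key : ((n:ℝ) - 1) * ZS f Finset.univ x ≤ ∑ k, ZS f (Finset.univ.erase k) x := by
    unfold ZS
    rw [Real.mul_iSup_of_nonneg hn']
    refine ciSup_le fun a => ?_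
    have e : ((n:ℝ) - 1) * ∑ i, f a (x i) = ∑ k, ∑ i ∈ Finset.univ.erase k, f a (x i) := by
      have : ∀ k : Fin n, ∑ i ∈ Finset.univ.erase k, f a (x i)
          = ∑ i, f a (x i) - f a (x k) := fun k => by
        rw [← Finset.add_sum_erase _ _ (Finset.mem_univ k)]; ring
      simp only [this, Finset.sum_sub_distrib, Finset.sum_const, Finset.card_univ,
        Fintype.card_fin, nsmul_eq_mul]
      ring
    rw [← abs_of_nonneg hn', ← abs_mul, e]
    exact (Finset.abs_sum_le_sum_abs _ _).trans
      (Finset.sum_le_sum fun k _ => le_ZS f h1 a _ x)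
  rw [Finset.sum_sub_distrib]
  simp only [Finset.sum_const, Finset.card_univ, Fintype.card_fin, nsmul_eq_mul]
  linarith

/-- approximate maximizer with sign -/
lemma approx
    (h1 : ∀ a u, |f a u| ≤ 1) (k : Fin n) (x : Fin n → E) (ε : ℝ) (hε : 0 < ε) :
    ∃ a : ι, ∃ c : ℝ, (c = 1 ∨ c = -1) ∧ ∀ y,
      c * f a y - ε ≤ ZS f Finset.univ (Function.update x k y)
        - ZS f (Finset.univ.erase k) (Function.update x k y) := by
  obtain ⟨a, ha⟩ := exists_lt_of_lt_ciSup
    (show ZS f (Finset.univ.erase k) x - ε < ⨆ a, |∑ i ∈ Finset.univ.erase k, f a (x i)| from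
      sub_lt_self _ hε)
  obtain ⟨c, hc, hc'⟩ : ∃ c : ℝ, (c = 1 ∨ c = -1) ∧ |∑ i ∈ Finset.univ.erase k, f a (x i)|
      = c * ∑ i ∈ Finset.univ.erase k, f a (x i) := by
    rcases abs_choice (∑ i ∈ Finset.univ.erase k, f a (x i)) with h | h
    · exact ⟨1, Or.inl rfl, by rw [one_mul]; exact h⟩
    · exact ⟨-1, Or.inr rfl, by rw [neg_one_mul]; exact h⟩
  refine ⟨a, c, hc, fun y => ?_⟩
  rw [ZS_ind f k x y]
  have hZ := le_ZS f h1 a Finset.univ (Function.update x k y)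
  rw [← Finset.add_sum_erase _ _ (Finset.mem_univ k)] at hZ
  have e : ∑ i ∈ Finset.univ.erase k, f a (Function.update x k y i)
      = ∑ i ∈ Finset.univ.erase k, f a (x i) :=
    Finset.sum_congr rfl fun i hi => by
      rw [Function.update_of_ne (Finset.ne_of_mem_erase hi)]
  rw [e, Function.update_self] at hZ
  have h3 : c * (f a y + ∑ i ∈ Finset.univ.erase k, f a (x i))
      ≤ |f a y + ∑ i ∈ Finset.univ.erase k, f a (x i)| := by
    rcases hc with rfl | rfl
    · rw [one_mul]; exact le_abs_self _
    · rw [neg_one_mul]; exact neg_le_abs _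
  linarith

lemma A_nonneg
    (hf : ∀ a, Measurable (f a)) (h1 : ∀ a u, |f a u| ≤ 1) (h0 : ∀ a, ∫ u, f a u ∂μ = 0) (k : Fin n) (x : Fin n → E) :
    0 ≤ A μ k (fun x => ZS f Finset.univ x - ZS f (Finset.univ.erase k) x) x := by
  refine le_of_forall_pos_le_add fun ε hε => ?_
  obtain ⟨a, c, hc, h⟩ := approx f h1 k x ε hε
  have hfa : BM (f a) := ⟨hf a, 1, h1 a⟩
  have hD := ((ZS_bm f hf h1 (Finset.univ : Finset (Fin n))).sub
    (ZS_bm f hf h1 (Finset.univ.erase k))).comp (upd_meas x k)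
  have := integral_mono (((hfa.cmul c).sub (BM.const ε)).int μ) (hD.int μ) h
  rw [integral_sub ((hfa.cmul c).int μ) (integrable_const _), integral_const_mul, h0] at this
  simp at this
  unfold A
  linarith

lemma A_sq
    (hf : ∀ a, Measurable (f a)) (h1 : ∀ a u, |f a u| ≤ 1) (s : ℝ) (h0 : ∀ a, ∫ u, f a u ∂μ = 0) (h2 : ∀ a, ∫ u, f a u ^ 2 ∂μ ≤ s) (k : Fin n) (x : Fin n → E) :
    A μ k (fun x => (ZS f Finset.univ x - ZS f (Finset.univ.erase k) x) ^ 2) x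
      ≤ s + 2 * A μ k (fun x => ZS f Finset.univ x - ZS f (Finset.univ.erase k) x) x := by
  refine le_of_forall_pos_le_add fun δ hδ => ?_
  obtain ⟨ε, hε, hεδ⟩ : ∃ ε : ℝ, 0 < ε ∧ ε ^ 2 + 2 * ε ≤ δ := by
    refine ⟨min 1 (δ / 3), by positivity, ?_⟩
    have q1 := min_le_left 1 (δ / 3)
    have q2 := min_le_right 1 (δ / 3)
    have q3 : 0 < min 1 (δ / 3) := by positivity
    nlinarith
  obtain ⟨a, c, hc, h⟩ := approx f h1 k x ε hε
  have hfa : BM (f a) := ⟨hf a, 1, h1 a⟩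
  have hD := ((ZS_bm f hf h1 (Finset.univ : Finset (Fin n))).sub
    (ZS_bm f hf h1 (Finset.univ.erase k))).comp (upd_meas x k)
  have hc2 : c ^ 2 = 1 := by rcases hc with rfl | rfl <;> norm_num
  unfold A
  have hle : ∫ y, (ZS f Finset.univ (Function.update x k y)
        - ZS f (Finset.univ.erase k) (Function.update x k y)) ^ 2 ∂μ ≤
      ∫ y, (((f a y ^ 2 + (-(2 * ε * c + 2 * c)) * f a y) + (ε ^ 2 + 2 * ε)) +
        2 * (ZS f Finset.univ (Function.update x k y)
        - ZS f (Finset.univ.erase k) (Function.update x k y))) ∂μ := by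
    refine integral_mono (hD.sq.int μ) ((((hfa.sq.add (hfa.cmul _)).add (BM.const _)).add
      (hD.cmul 2)).int μ) fun y => ?_
    have q1 := h y
    have q2 := ZS_le_one f h1 k (Function.update x k y)
    have q3 : c * f a y ≤ 1 := by
      have := abs_le.1 (h1 a y)
      rcases hc with rfl | rfl <;> linarith
    show (ZS f Finset.univ (Function.update x k y)
        - ZS f (Finset.univ.erase k) (Function.update x k y)) ^ 2 ≤ _ 
    set D := ZS f Finset.univ (Function.update x k y)
        - ZS f (Finset.univ.erase k) (Function.update x k y)
    show D ^ 2 ≤ ((f a y ^ 2 + (-(2 * ε * c + 2 * c)) * f a y) + (ε ^ 2 + 2 * ε)) + 2 * D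
    have e : f a y ^ 2 = (c * f a y) ^ 2 := by rw [mul_pow, hc2, one_mul]
    rw [e]
    nlinarith [mul_nonneg (sub_nonneg.2 q1) (show 0 ≤ 2 - D - (c * f a y - ε) by linarith)]
  rw [integral_add (((hfa.sq.add (hfa.cmul _)).add (BM.const _)).int μ) ((hD.cmul 2).int μ),
    integral_add ((hfa.sq.add (hfa.cmul _)).int μ) (integrable_const _),
    integral_add (hfa.sq.int μ) ((hfa.cmul _).int μ), integral_const_mul, integral_const_mul,
    h0] at hle
  simp at hle
  have := h2 a
  linarith

theorem emp_tail
    (hf : ∀ a, Measurable (f a)) (h1 : ∀ a u, |f a u| ≤ 1) (s : ℝ) (h0 : ∀ a, ∫ u, f a u ∂μ = 0) (h2 : ∀ a, ∫ u, f a u ^ 2 ∂μ ≤ s) (hs : 0 ≤ s) (m : ℝ) (hm : 0 < m)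
    (hE : ∫ x, ZS f Finset.univ x ∂(Measure.pi (fun _ : Fin n => μ)) ≤ m) (r : ℝ) (hr : 0 < r) :
    (Measure.pi (fun _ : Fin n => μ)).real {x | m + r ≤ ZS f Finset.univ x}
      ≤ Real.exp (-(r ^ 2 / (4 * (n * s + 2 * m + r)))) :=
  tail _ _ (ZS_bm f hf h1 _) (n * s) m (by positivity) hm hE
    (fun t t0 t1 => key μ _ (ZS_bm f hf h1 _) (fun k => ZS f (Finset.univ.erase k))
      (fun k => ZS_bm f hf h1 _) (fun k => ZS_ind f k) s hs (ZS_le_one f h1) (ZS_sum f h1)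
      (A_nonneg μ f hf h1 h0) (A_sq μ f hf h1 s h0 h2) t t0 t1) r hr

end emp

lemma final_calc (s m ζ : ℝ) (hs : 0 < s) (hm : 0 < m) (hζ : 0 < ζ) :
    Real.exp (-((2 * ζ * m) ^ 2 / (4 * (s + 2 * m + 2 * ζ * m)))) ≤
    2 * max (Real.exp (-(ζ ^ 2 / 6) * (m ^ 2 / s)))
      (Real.exp (-(min ζ 1 * ζ / 21) * (2 * m))) := by
  have hpos : 0 < max (Real.exp (-(ζ ^ 2 / 6) * (m ^ 2 / s)))
      (Real.exp (-(min ζ 1 * ζ / 21) * (2 * m))) := lt_max_of_lt_left (Real.exp_pos _)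
  have hq : (0:ℝ) < 4 * (s + 2 * m + 2 * ζ * m) := by positivity
  suffices h : Real.exp (-((2 * ζ * m) ^ 2 / (4 * (s + 2 * m + 2 * ζ * m)))) ≤
    max (Real.exp (-(ζ ^ 2 / 6) * (m ^ 2 / s)))
      (Real.exp (-(min ζ 1 * ζ / 21) * (2 * m))) by linarith
  rcases le_total (s + 2 * m + 2 * ζ * m) (6 * s) with h | h
  · refine le_max_of_le_left (Real.exp_le_exp.2 ?_)
    rw [neg_mul, neg_le_neg_iff, div_mul_div_comm, div_le_div_iff₀ (by positivity) hq]
    nlinarith [mul_le_mul_of_nonneg_left h (by positivity : 0 ≤ 4 * (ζ ^ 2 * m ^ 2))]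
  · refine le_max_of_le_right (Real.exp_le_exp.2 ?_)
    rw [neg_mul, neg_le_neg_iff, le_div_iff₀ hq]
    have hk : min ζ 1 * (1 + ζ) ≤ 2 * ζ := by
      rcases le_total ζ 1 with h1 | h1
      · rw [min_eq_left h1]; nlinarith
      · rw [min_eq_right h1]; linarith
    have hmin : 0 < min ζ 1 := lt_min hζ one_pos
    have h5 : s + 2 * m + 2 * ζ * m ≤ 12 / 5 * (m * (1 + ζ)) := by linarith
    calc min ζ 1 * ζ / 21 * (2 * m) * (4 * (s + 2 * m + 2 * ζ * m))
        ≤ min ζ 1 * ζ / 21 * (2 * m) * (4 * (12 / 5 * (m * (1 + ζ)))) := by gcongr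
      _ = (96 / 105) * (ζ * m ^ 2) * (min ζ 1 * (1 + ζ)) := by ring
      _ ≤ (96 / 105) * (ζ * m ^ 2) * (2 * ζ) := by gcongr
      _ ≤ (2 * ζ * m) ^ 2 := by nlinarith [sq_nonneg (ζ * m)]

end Tal

/-- **Talagrand's inequality** in the Birgé–Massart form (Lemma 2 of the paper). -/
theorem talagrand_inequality
    {Ω : Type*} [MeasurableSpace Ω] (P : Measure Ω) [IsProbabilityMeasure P]
    {E : Type*} [MeasurableSpace E]
    (n : ℕ) (hn : 0 < n) (U : Fin n → Ω → E)
    (hmeas : ∀ i, Measurable (U i))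
    (hindep : iIndepFun U P)
    (hident : ∀ i j, Measure.map (U i) P = Measure.map (U j) P)
    {ι : Type*} [Countable ι] [Nonempty ι]
    (τ : ι → E → ℝ) (hτmeas : ∀ a, Measurable (τ a))
    (ν : ι → Ω → ℝ)
    (hν : ∀ a ω, ν a ω = (n : ℝ)⁻¹ * ∑ i, (τ a (U i ω) - ∫ ω', τ a (U i ω') ∂P))
    (M H v : ℝ) (hM : 0 < M) (hH : 0 < H) (hv : 0 < v)
    (hbound : ∀ a u, |τ a u| ≤ M)
    (hexp : ∫ ω, (⨆ a, |ν a ω|) ∂P ≤ H)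
    (hvar : ∀ a, ∫ ω, (τ a (U ⟨0, hn⟩ ω) - ∫ ω', τ a (U ⟨0, hn⟩ ω') ∂P) ^ 2 ∂P ≤ v)
    (ζ : ℝ) (hζ : 0 < ζ) :
    (P {ω | (1 + 2 * ζ) * H ≤ ⨆ a, |ν a ω|}).toReal
      ≤ 2 * max (Real.exp (-(ζ ^ 2 / 6) * (n * H ^ 2 / v)))
          (Real.exp (-(min ζ 1 * ζ / 21) * (n * H / M))) := by
  have hn' : (0:ℝ) < n := by exact_mod_cast hn
  set μ := Measure.map (U ⟨0, hn⟩) P with hμ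
  have : IsProbabilityMeasure μ := Measure.isProbabilityMeasure_map (hmeas _).aemeasurable
  have hmap : ∀ i, Measure.map (U i) P = μ := fun i => hident i _
  have hτb : ∀ a, Tal.BM (τ a) := fun a => ⟨hτmeas a, M, hbound a⟩
  have hmean : ∀ a i, ∫ ω', τ a (U i ω') ∂P = ∫ u, τ a u ∂μ := fun a i => by
    rw [← hmap i, integral_map (hmeas i).aemeasurable (hτmeas a).aestronglyMeasurable]
  have hmb : ∀ a, |∫ u, τ a u ∂μ| ≤ M := fun a => by
    have := norm_integral_le_of_norm_le_const (μ := μ) (f := τ a) (C := M)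
      (Filter.Eventually.of_forall (hbound a))
    simpa using this
  set f : ι → E → ℝ := fun a u => (2 * M)⁻¹ * (τ a u - ∫ u, τ a u ∂μ) with hf
  have hfm : ∀ a, Measurable (f a) := fun a =>
    (((hτb a).sub (Tal.BM.const _)).cmul _).1
  have hf1 : ∀ a u, |f a u| ≤ 1 := fun a u => by
    show |(2 * M)⁻¹ * (τ a u - ∫ u, τ a u ∂μ)| ≤ 1
    rw [abs_mul, abs_of_pos (by positivity : 0 < (2 * M)⁻¹), inv_mul_le_iff₀ (by positivity)]
    have := abs_sub (τ a u) (∫ u, τ a u ∂μ)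
    linarith [hbound a u, hmb a]
  have hf0 : ∀ a, ∫ u, f a u ∂μ = 0 := fun a => by
    show ∫ u, (2 * M)⁻¹ * (τ a u - ∫ u, τ a u ∂μ) ∂μ = 0
    rw [integral_const_mul, integral_sub ((hτb a).int μ) (integrable_const _)]
    simp
  have hf2 : ∀ a, ∫ u, f a u ^ 2 ∂μ ≤ v / (4 * M ^ 2) := fun a => by
    have h := hvar a
    rw [hmean, ← integral_map (φ := U ⟨0, hn⟩) (f := fun u => (τ a u - ∫ u, τ a u ∂μ) ^ 2)
      (hmeas _).aemeasurable
      ((hτb a).sub (Tal.BM.const _)).sq.1.aestronglyMeasurable] at h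
    have e : ∀ u, f a u ^ 2 = (4 * M ^ 2)⁻¹ * (τ a u - ∫ u, τ a u ∂μ) ^ 2 := fun u => by
      show ((2 * M)⁻¹ * (τ a u - ∫ u, τ a u ∂μ)) ^ 2 = _
      rw [mul_pow, inv_pow]; congr 2; ring
    simp only [e]
    rw [integral_const_mul, inv_mul_eq_div]
    gcongr
  have hsup : ∀ ω, Tal.ZS f Finset.univ (fun i => U i ω) = n / (2 * M) * ⨆ a, |ν a ω| := by
    intro ω
    unfold Tal.ZS
    rw [Real.mul_iSup_of_nonneg (by positivity)]
    congr 1; ext a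
    rw [hν a ω, ← abs_of_pos (by positivity : 0 < (n:ℝ) / (2 * M)), ← abs_mul]
    congr 1
    simp only [hmean]
    show ∑ i, (2 * M)⁻¹ * (τ a (U i ω) - ∫ u, τ a u ∂μ) = _
    rw [← Finset.mul_sum]
    field_simp
  have hUm : Measurable (fun ω i => U i ω) := measurable_pi_iff.2 hmeas
  have hpi : Measure.map (fun ω i => U i ω) P = Measure.pi (fun _ : Fin n => μ) := by
    rw [(iIndepFun_iff_map_fun_eq_pi_map fun i => (hmeas i).aemeasurable).1 hindep]
    simp only [hmap]
  have hZb := Tal.ZS_bm f hfm hf1 (Finset.univ : Finset (Fin n))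
  have hE : ∫ x, Tal.ZS f Finset.univ x ∂(Measure.pi (fun _ : Fin n => μ)) ≤ n * H / (2 * M) := by
    rw [← hpi, integral_map hUm.aemeasurable hZb.1.aestronglyMeasurable]
    simp only [hsup]
    rw [integral_const_mul]
    calc (n:ℝ) / (2 * M) * ∫ ω, (⨆ a, |ν a ω|) ∂P ≤ n / (2 * M) * H := by gcongr
      _ = _ := by ring
  have hm : 0 < n * H / (2 * M) := by positivity
  have hT := Tal.emp_tail μ f hfm hf1 (v / (4 * M ^ 2)) hf0 hf2 (by positivity) _ hm hE
    (2 * ζ * (n * H / (2 * M))) (by positivity)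
  have hC := Tal.final_calc (n * (v / (4 * M ^ 2))) (n * H / (2 * M)) ζ (by positivity) hm hζ
  have e1 : (n * H / (2 * M)) ^ 2 / (n * (v / (4 * M ^ 2))) = n * H ^ 2 / v := by
    field_simp; ring
  have e2 : 2 * (n * H / (2 * M)) = n * H / M := by field_simp
  rw [e1, e2] at hC
  rw [e2] at hT
  refine le_trans (le_of_eq ?_) (hT.trans hC)
  rw [← hpi, Measure.real, Measure.map_apply hUm (measurableSet_le measurable_const hZb.1)]
  congr 2
  ext ω
  simp only [Set.mem_ofPred_eq, Set.mem_preimage, hsup]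
  have hc : 0 < (n:ℝ) / (2 * M) := by positivity
  rw [show n * H / (2 * M) + 2 * ζ * (n * H / (2 * M)) = n / (2 * M) * ((1 + 2 * ζ) * H) by ring,
    mul_le_mul_iff_right₀ hc]
end
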